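/- arXiv:1803.09245 — 12 statements merged into one kernel-verified Lean document; each statement's English description precedes it below -/
import Mathlib

section
/- Let p be a prime, R a ℤ_(p)-algebra, and P an fs monoid with P^gp torsion free. Then every z ∈ W(R[P]) can be written uniquely as a convergent sum z = Σ_{m ≥ 0, x ∈ P} V^m([a_{x,m}·T^x]) with a_{x,m} ∈ R: there is a unique family (a_{x,m})_{m ∈ ℕ, x ∈ P} of elements of R such that for each m the set {x ∈ P : a_{x,m} ≠ 0} is finite and, for every M ∈ ℕ, the image of z in W_M(R[P]) equals the (finite) sum of the images of the terms V^m([a_{x,m}·T^x]) with m < M. -/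
open scoped BigOperators


noncomputable def wvS (p : ℕ) [Fact p.Prime] {R Q : Type*} [CommRing R] [AddCommMonoid Q]
    (a : Q → R) : WittVector p (AddMonoidAlgebra R Q) :=
  ∑ᶠ x : Q, WittVector.teichmuller p (AddMonoidAlgebra.single x (a x))

theorem wvS_fin (p : ℕ) [Fact p.Prime] {R Q : Type*} [CommRing R] [AddCommMonoid Q]
    (a : Q → R) (ha : (Function.support a).Finite) :
    (Function.support fun x : Q =>
      WittVector.teichmuller p (AddMonoidAlgebra.single x (a x))).Finite := by
  refine ha.subset fun x hx h => hx ?_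
  simp only [h, AddMonoidAlgebra.single_zero, WittVector.teichmuller_zero]

theorem wvS_coeff (p : ℕ) [Fact p.Prime] {R Q : Type*} [CommRing R] [AddCommMonoid Q]
    (a : Q → R) (ha : (Function.support a).Finite) (y : Q) :
    ((wvS p a).coeff 0).coeff y = a y := by
  let f : WittVector p (AddMonoidAlgebra R Q) →+ R :=
    ((Finsupp.applyAddHom y).comp
      (AddMonoidAlgebra.coeffAddEquiv (R := R) (M := Q)).toAddMonoidHom).comp
      (WittVector.constantCoeff (p := p) (R := AddMonoidAlgebra R Q)).toAddMonoidHom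
  have hf : ∀ w, f w = (w.coeff 0).coeff y := fun w => rfl
  rw [← hf, wvS, f.map_finsum (wvS_fin p a ha)]
  simp only [hf, WittVector.teichmuller_coeff_zero, AddMonoidAlgebra.coeff_single]
  rw [finsum_eq_single _ y]
  · simp
  · intro x hx
    simp [Finsupp.single_apply, hx]

theorem wvS_trunc (p : ℕ) [Fact p.Prime] {R Q : Type*} [CommRing R] [AddCommMonoid Q]
    (a : Q → R) (ha : (Function.support a).Finite) (m M : ℕ) :
    ∑ᶠ x : Q, WittVector.truncate M
      ((⇑(WittVector.verschiebung : WittVector p (AddMonoidAlgebra R Q) →+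
                  WittVector p (AddMonoidAlgebra R Q)))^[m]
              (WittVector.teichmuller p (AddMonoidAlgebra.single x (a x)))) =
    WittVector.truncate M ((⇑(WittVector.verschiebung : WittVector p (AddMonoidAlgebra R Q) →+
                  WittVector p (AddMonoidAlgebra R Q)))^[m] (wvS p a)) := by
  let V : AddMonoid.End (WittVector p (AddMonoidAlgebra R Q)) := WittVector.verschiebung
  let f : WittVector p (AddMonoidAlgebra R Q) →+ TruncatedWittVector p M (AddMonoidAlgebra R Q) :=
    (WittVector.truncate M).toAddMonoidHom.comp (V ^ m : AddMonoid.End _)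
  have hf : ∀ w, f w = WittVector.truncate M
      ((⇑(WittVector.verschiebung : WittVector p (AddMonoidAlgebra R Q) →+
                  WittVector p (AddMonoidAlgebra R Q)))^[m] w) := by
    intro w
    change WittVector.truncate M ((V ^ m) w) = _
    rw [AddMonoid.End.coe_pow]
    rfl
  simp only [← hf]
  rw [wvS, f.map_finsum (wvS_fin p a ha)]

theorem wv_step (p : ℕ) [Fact p.Prime] {R Q : Type*} [CommRing R] [AddCommMonoid Q]
    (w : WittVector p (AddMonoidAlgebra R Q)) :
    w = wvS p (w.coeff 0).coeff +
      WittVector.verschiebung ((w - wvS p (w.coeff 0).coeff).shift 1) := by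
  have h : ∀ i < 1, (w - wvS p (w.coeff 0).coeff).coeff i = 0 := by
    intro i hi
    obtain rfl : i = 0 := by omega
    have := (WittVector.constantCoeff (p := p) (R := AddMonoidAlgebra R Q)).map_sub w
      (wvS p (w.coeff 0).coeff)
    change (w - wvS p (w.coeff 0).coeff).coeff 0 =
      w.coeff 0 - (wvS p (w.coeff 0).coeff).coeff 0 at this
    rw [this, sub_eq_zero]
    apply AddMonoidAlgebra.ext
    ext y
    rw [wvS_coeff p _ (Finsupp.finite_support _)]
  have := WittVector.eq_iterate_verschiebung h
  rw [Function.iterate_one] at this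
  rw [← this]; abel

noncomputable def wvZ (p : ℕ) [Fact p.Prime] {R Q : Type*} [CommRing R] [AddCommMonoid Q]
    (z : WittVector p (AddMonoidAlgebra R Q)) : ℕ → WittVector p (AddMonoidAlgebra R Q)
  | 0 => z
  | m + 1 => (wvZ p z m - wvS p ((wvZ p z m).coeff 0).coeff).shift 1

theorem wvZ_sum (p : ℕ) [Fact p.Prime] {R Q : Type*} [CommRing R] [AddCommMonoid Q]
    (z : WittVector p (AddMonoidAlgebra R Q)) (M : ℕ) :
    z = ∑ m ∈ Finset.range M, (⇑(WittVector.verschiebung : WittVector p (AddMonoidAlgebra R Q) →+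
                  WittVector p (AddMonoidAlgebra R Q)))^[m] (wvS p ((wvZ p z m).coeff 0).coeff) +
      (⇑(WittVector.verschiebung : WittVector p (AddMonoidAlgebra R Q) →+
                  WittVector p (AddMonoidAlgebra R Q)))^[M] (wvZ p z M) := by
  induction M with
  | zero => simp [wvZ]
  | succ M ih =>
    rw [Finset.sum_range_succ, add_assoc, Function.iterate_succ_apply, ← iterate_map_add]
    have := wv_step p (wvZ p z M)
    rw [wvZ, ← this]
    exact ih

/-- Let `p` be a prime, `R` a `ℤ_(p)`-algebra (every prime `q ≠ p`
is invertible in `R`), and `P` an fs monoid with `P^gp` torsion free (modelled as an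
additive submonoid of a torsion-free abelian group `G` which it generates, with `↥P`
finitely generated and `P` saturated in `G`).  Then every Witt vector
`z ∈ W(R[P])` can be written uniquely as a convergent sum
`z = Σ_{m ≥ 0, x ∈ P} V^m([a_{x,m} · T^x])`:  there is a unique family
`(a_{x,m})` of elements of `R` such that for each `m` the set
`{x ∈ P | a_{x,m} ≠ 0}` is finite, and for every `M ∈ ℕ` the image of `z` in
`W_M(R[P])` equals the finite sum of the images of the terms
`V^m([a_{x,m} · T^x])` with `m < M`. -/
theorem wittVector_monoidAlgebra_unique_expansion
    (p : ℕ) [Fact p.Prime] (R : Type*) [CommRing R]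
    (hR : ∀ q : ℕ, q.Prime → q ≠ p → IsUnit (q : R))
    {G : Type*} [AddCommGroup G]
    (hTF : ∀ (g : G) (n : ℕ), 0 < n → n • g = 0 → g = 0)
    (P : AddSubmonoid G)
    (hGen : AddSubgroup.closure (P : Set G) = ⊤)
    (hFG : AddMonoid.FG ↥P)
    (hSat : ∀ g : G, ∀ n : ℕ, 0 < n → n • g ∈ P → g ∈ P)
    (z : WittVector p (AddMonoidAlgebra R ↥P)) :
    ∃! a : ℕ → ↥P → R,
      (∀ m : ℕ, (Function.support (a m)).Finite) ∧
      ∀ M : ℕ, WittVector.truncate M z =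
        ∑ m ∈ Finset.range M, ∑ᶠ x : ↥P,
          WittVector.truncate M
            ((⇑(WittVector.verschiebung :
                WittVector p (AddMonoidAlgebra R ↥P) →+
                  WittVector p (AddMonoidAlgebra R ↥P)))^[m]
              (WittVector.teichmuller p (AddMonoidAlgebra.single x (a m x)))) := by
  have key : ∀ a : ℕ → ↥P → R, (∀ m : ℕ, (Function.support (a m)).Finite) → ∀ M : ℕ,
      (∑ m ∈ Finset.range M, ∑ᶠ x : ↥P,
          WittVector.truncate M
            ((⇑(WittVector.verschiebung :
                WittVector p (AddMonoidAlgebra R ↥P) →+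
                  WittVector p (AddMonoidAlgebra R ↥P)))^[m]
              (WittVector.teichmuller p (AddMonoidAlgebra.single x (a m x))))) =
      ∑ m ∈ Finset.range M, WittVector.truncate M
            ((⇑(WittVector.verschiebung :
                WittVector p (AddMonoidAlgebra R ↥P) →+
                  WittVector p (AddMonoidAlgebra R ↥P)))^[m] (wvS p (a m))) := by
    intro a ha M
    exact Finset.sum_congr rfl fun m _ => wvS_trunc p (a m) (ha m) m M
  have ex : ∀ M : ℕ, WittVector.truncate M z = ∑ m ∈ Finset.range M, WittVector.truncate M
            ((⇑(WittVector.verschiebung :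
                WittVector p (AddMonoidAlgebra R ↥P) →+
                  WittVector p (AddMonoidAlgebra R ↥P)))^[m]
                    (wvS p ((wvZ p z m).coeff 0).coeff)) := by
    intro M
    conv_lhs => rw [wvZ_sum p z M]
    rw [map_add, map_sum, add_eq_left, ← RingHom.mem_ker, WittVector.mem_ker_truncate]
    intro i hi
    exact WittVector.iterate_verschiebung_coeff_eq_zero _ hi
  refine ⟨fun m => ((wvZ p z m).coeff 0).coeff,
    ⟨fun m => Finsupp.finite_support _, fun M => ?_⟩, ?_⟩
  · rw [key _ (fun m => Finsupp.finite_support _) M]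
    exact ex M
  · rintro b ⟨hb, hbz⟩
    funext m
    induction m using Nat.strong_induction_on with
    | _ m ih =>
      have h1 := hbz (m + 1)
      rw [key b hb, ex, Finset.sum_range_succ, Finset.sum_range_succ] at h1
      rw [Finset.sum_congr rfl (g := fun k => WittVector.truncate (m + 1)
            ((⇑(WittVector.verschiebung :
                WittVector p (AddMonoidAlgebra R ↥P) →+
                  WittVector p (AddMonoidAlgebra R ↥P)))^[k] (wvS p (b k))))
          (fun k hk => by rw [ih k (Finset.mem_range.mp hk)])] at h1
      have h2 := congrArg (TruncatedWittVector.coeff (Fin.last m)) (add_left_cancel h1)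
      rw [WittVector.coeff_truncate, WittVector.coeff_truncate, Fin.val_last] at h2
      have h3 : ∀ w : WittVector p (AddMonoidAlgebra R ↥P),
          (WittVector.verschiebung^[m] w).coeff m = w.coeff 0 := by
        intro w
        simpa using WittVector.iterate_verschiebung_coeff w m 0
      rw [h3, h3] at h2
      funext y
      rw [← wvS_coeff p (b m) (hb m) y, ← h2, wvS_coeff p _ (Finsupp.finite_support _)]
end

section
/- Let p be a prime, R a ℤ_(p)-algebra, and P an fs monoid with P^gp torsion free. Then every z ∈ W(R[P]) can be written uniquely as a convergent sum z = Σ_{x ∈ P[1/p]} b(ξ_x, x) of P-basic Witt differentials of degree 0: there is a unique family (ξ_x)_{x ∈ P[1/p]} with ξ_x ∈ V^{u(x)}·W(R) such that, for every m ∈ ℕ, all but finitely many ξ_x lie in V^m·W(R) and the image of z in W_m(R[P]) equals the sum of the images of the b(ξ_x, x) (all but finitely many of which are zero). Moreover, z lies in the kernel of W(R[P]) → W_m(R[P]) if and only if ξ_x ∈ V^m·W(R) for all x ∈ P[1/p]. -/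
open scoped BigOperators Classical

/-- `H` together with `ι : G →+ H` realizes the localization `G ⊗_ℤ ℤ[1/p]`
of the abelian group `G` away from the prime `p`. -/
structure IsPLocalization (p : ℕ) {G H : Type*} [AddCommGroup G] [AddCommGroup H]
    (ι : G →+ H) : Prop where
  smul_bij : Function.Bijective (fun h : H => p • h)
  exists_rep : ∀ h : H, ∃ (n : ℕ) (g : G), p ^ n • h = ι g
  ker_eq : ∀ g : G, ι g = 0 ↔ ∃ n : ℕ, p ^ n • g = 0

/-- `P[1/p]`, viewed inside `H = P^gp ⊗_ℤ ℤ[1/p]`. -/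
def pDiv (p : ℕ) {G H : Type*} [AddCommGroup G] [AddCommGroup H] (ι : G →+ H)
    (P : AddSubmonoid G) : Set H :=
  {h | ∃ n : ℕ, p ^ n • h ∈ ι '' (P : Set G)}

/-- `u(x)` : the least `n ∈ ℕ` such that `p^n • x` lies in the image of `P`. -/
noncomputable def uVal (p : ℕ) {G H : Type*} [AddCommGroup G] [AddCommGroup H]
    (ι : G →+ H) (P : AddSubmonoid G) (x : H) : ℕ :=
  sInf {n : ℕ | p ^ n • x ∈ ι '' (P : Set G)}

/-- The element `p^{u(x)} • x` of `P`, for `x ∈ P[1/p]` (junk value `0` otherwise). -/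
noncomputable def pLift (p : ℕ) {G H : Type*} [AddCommGroup G] [AddCommGroup H]
    (ι : G →+ H) (P : AddSubmonoid G) (x : H) : ↥P :=
  if h : p ^ uVal p ι P x • x ∈ ι '' (P : Set G) then
    ⟨((Set.mem_image _ _ _).1 h).choose, ((Set.mem_image _ _ _).1 h).choose_spec.1⟩
  else 0

/-- The `P`-basic Witt differential of degree `0`:
`b(V^{u(x)} η, x) = V^{u(x)} (η · X^{p^{u(x)} x}) ∈ W(R[P])`. -/
noncomputable def bwitt (p : ℕ) [Fact p.Prime] {G H : Type*}
    [AddCommGroup G] [AddCommGroup H] (ι : G →+ H) (P : AddSubmonoid G)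
    {R : Type*} [CommRing R] (η : WittVector p R) (x : H) :
    WittVector p (AddMonoidAlgebra R ↥P) :=
  (⇑(WittVector.verschiebung :
      WittVector p (AddMonoidAlgebra R ↥P) →+
        WittVector p (AddMonoidAlgebra R ↥P)))^[uVal p ι P x]
    (WittVector.map (algebraMap R (AddMonoidAlgebra R ↥P)) η *
      WittVector.teichmuller p (AddMonoidAlgebra.single (pLift p ι P x) (1 : R)))

/-- The condition that the family `η` (encoding the `P`-basic Witt differentials
`b(V^{u(x)} (η x), x)` of degree `0`) is an expansion of `z`:  for every `m` all but
finitely many of the coefficients `ξ_x = V^{u(x)} (η x)` lie in `V^m W(R)`, and for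
every `m` the image of `z` in `W_m(R[P])` is the sum of the images of the
`b(ξ_x, x)`. -/
def IsBasicExpansion (p : ℕ) [Fact p.Prime] {G H : Type*}
    [AddCommGroup G] [AddCommGroup H] (ι : G →+ H) (P : AddSubmonoid G)
    {R : Type*} [CommRing R] (z : WittVector p (AddMonoidAlgebra R ↥P))
    (η : {x : H // x ∈ pDiv p ι P} → WittVector p R) : Prop :=
  (∀ m : ℕ,
      {x : {x : H // x ∈ pDiv p ι P} |
        (⇑(WittVector.verschiebung : WittVector p R →+ WittVector p R))^[uVal p ι P x.1]
            (η x) ∉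
          Set.range
            (⇑(WittVector.verschiebung : WittVector p R →+ WittVector p R))^[m]}.Finite) ∧
  ∀ m : ℕ, WittVector.truncate m z =
    ∑ᶠ x : {x : H // x ∈ pDiv p ι P},
      WittVector.truncate m (bwitt p ι P (η x) x.1)

section Aux

variable {p : ℕ} [hp : Fact p.Prime]

theorem aux_ghost {S : Type*} [CommRing S] (w : WittVector p S) (a : S) (n : ℕ) :
    WittVector.ghostComponent n (WittVector.mk p (fun n => w.coeff n * a ^ p ^ n)) =
      WittVector.ghostComponent n (w * WittVector.teichmuller p a) := by
  rw [map_mul, WittVector.ghostComponent_teichmuller, WittVector.ghostComponent_apply,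
    WittVector.ghostComponent_apply, aeval_wittPolynomial, aeval_wittPolynomial, Finset.sum_mul]
  refine Finset.sum_congr rfl fun i hi => ?_
  have hi' : i ≤ n := by simpa [Nat.lt_succ_iff] using hi
  have : a ^ p ^ n = (a ^ p ^ i) ^ p ^ (n - i) := by
    rw [← pow_mul, ← pow_add, Nat.add_sub_cancel' hi']
  rw [this, WittVector.coeff_mk, mul_pow]; ring

theorem aux_map_mk {S T : Type*} [CommRing S] [CommRing T] (f : S →+* T)
    (w : WittVector p S) (a : S) :
    WittVector.map f (WittVector.mk p (fun n => w.coeff n * a ^ p ^ n)) =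
      WittVector.mk p (fun n => (WittVector.map f w).coeff n * (f a) ^ p ^ n) := by
  ext n; simp [WittVector.map_coeff]

theorem mul_teich1 {S : Type*} (w : WittVector p (MvPolynomial S ℚ)) (a : MvPolynomial S ℚ) :
    WittVector.mk p (fun n => w.coeff n * a ^ p ^ n) = w * WittVector.teichmuller p a := by
  apply (WittVector.ghostMap.bijective_of_invertible p (MvPolynomial S ℚ)).1
  ext1 n
  simp only [WittVector.ghostMap_apply]
  exact aux_ghost w a n

theorem mul_teich2 {S : Type*} (w : WittVector p (MvPolynomial S ℤ)) (a : MvPolynomial S ℤ) :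
    WittVector.mk p (fun n => w.coeff n * a ^ p ^ n) = w * WittVector.teichmuller p a := by
  refine WittVector.map_injective (MvPolynomial.map (Int.castRingHom ℚ))
    (MvPolynomial.map_injective _ Int.cast_injective) ?_
  rw [aux_map_mk, mul_teich1, map_mul, WittVector.map_teichmuller]

theorem mul_teich {S : Type*} [CommRing S] (w : WittVector p S) (a : S) :
    w * WittVector.teichmuller p a = WittVector.mk p (fun n => w.coeff n * a ^ p ^ n) := by
  obtain ⟨a, rfl⟩ := MvPolynomial.counit_surjective S a
  obtain ⟨w, rfl⟩ := WittVector.map_surjective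
    ((MvPolynomial.counit S : MvPolynomial S ℤ →+* S)) (MvPolynomial.counit_surjective S) w
  rw [← WittVector.map_teichmuller, ← map_mul, ← mul_teich2, aux_map_mk]

theorem viter_coeff_lt {S : Type*} [CommRing S] (w : WittVector p S) :
    ∀ {m n : ℕ}, n < m → ((⇑(WittVector.verschiebung :
      WittVector p S →+ WittVector p S))^[m] w).coeff n = 0 := by
  intro m n h
  exact WittVector.iterate_verschiebung_coeff_eq_zero w h

theorem mem_range_viter {S : Type*} [CommRing S] (w : WittVector p S) (m : ℕ) :
    w ∈ Set.range (⇑(WittVector.verschiebung : WittVector p S →+ WittVector p S))^[m] ↔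
      ∀ n < m, w.coeff n = 0 := by
  constructor
  · rintro ⟨v, rfl⟩ n hn
    exact viter_coeff_lt v hn
  · intro h
    exact ⟨_, (WittVector.eq_iterate_verschiebung h).symm⟩

theorem truncate_eq_zero_iff {S : Type*} [CommRing S] (w : WittVector p S) (m : ℕ) :
    WittVector.truncate m w = 0 ↔ ∀ n < m, w.coeff n = 0 :=
  WittVector.mem_ker_truncate m w

/-- `V^m` as an additive map. -/
noncomputable def viterHom (p : ℕ) [Fact p.Prime] (S : Type*) [CommRing S] (m : ℕ) :
    WittVector p S →+ WittVector p S where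
  toFun := (⇑(WittVector.verschiebung : WittVector p S →+ WittVector p S))^[m]
  map_zero' := iterate_map_zero _ m
  map_add' := iterate_map_add _ m

theorem viterHom_apply {S : Type*} [CommRing S] (m : ℕ) (w : WittVector p S) :
    viterHom p S m w =
      (⇑(WittVector.verschiebung : WittVector p S →+ WittVector p S))^[m] w := rfl

theorem coeff_sum_of_lt {S : Type*} [CommRing S] {α : Type*} (s : Finset α)
    (f : α → WittVector p S) (m : ℕ) (h : ∀ i ∈ s, ∀ n < m, (f i).coeff n = 0) :
    (∑ i ∈ s, f i).coeff m = ∑ i ∈ s, (f i).coeff m := by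
  have h1 : ∑ i ∈ s, f i = (⇑(WittVector.verschiebung :
      WittVector p S →+ WittVector p S))^[m] (∑ i ∈ s, (f i).shift m) := by
    rw [← viterHom_apply, map_sum]
    exact Finset.sum_congr rfl fun i hi => WittVector.eq_iterate_verschiebung (h i hi)
  have h2 := WittVector.iterate_verschiebung_coeff (p := p) (∑ i ∈ s, (f i).shift m) m 0
  rw [zero_add] at h2
  rw [h1, h2]
  have := map_sum (WittVector.constantCoeff (p := p) (R := S)) (fun i => (f i).shift m) s
  simp only [WittVector.constantCoeff_apply, WittVector.shift_coeff, add_zero] at this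
  exact this

/-- `V^n [a]`. -/
noncomputable def vt (p : ℕ) [Fact p.Prime] {S : Type*} [CommRing S] (n : ℕ) (a : S) :
    WittVector p S :=
  (⇑(WittVector.verschiebung : WittVector p S →+ WittVector p S))^[n]
    (WittVector.teichmuller p a)

theorem vt_coeff {S : Type*} [CommRing S] (n : ℕ) (a : S) (k : ℕ) :
    (vt p n a).coeff k = if k = n then a else 0 := by
  unfold vt
  rcases lt_or_ge k n with h | h
  · rw [viter_coeff_lt _ h, if_neg h.ne]
  · obtain ⟨j, rfl⟩ := Nat.exists_eq_add_of_le' h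
    rw [WittVector.iterate_verschiebung_coeff]
    rcases Nat.eq_zero_or_pos j with rfl | hj
    · simp
    · rw [WittVector.teichmuller_coeff_pos p a j hj, if_neg (by omega)]

theorem vt_zero {S : Type*} [CommRing S] (n : ℕ) : vt p n (0 : S) = 0 := by
  ext k; rw [vt_coeff]; simp

theorem truncate_sum_vt {S : Type*} [CommRing S] (w : WittVector p S) (m : ℕ) :
    WittVector.truncate m w =
      ∑ n ∈ Finset.range m, WittVector.truncate m (vt p n (w.coeff n)) := by
  have key : ∀ k, (∀ j, (∑ n ∈ Finset.range k, vt p n (w.coeff n)).coeff j =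
      if j < k then w.coeff j else 0) := by
    intro k
    induction k with
    | zero => intro j; simp
    | succ k ih =>
      intro j
      rw [Finset.sum_range_succ, WittVector.coeff_add_of_disjoint, ih, vt_coeff]
      · rcases lt_trichotomy j k with h | h | h
        · rw [if_pos h, if_neg h.ne, if_pos (by omega), add_zero]
        · subst h; simp
        · rw [if_neg (by omega), if_neg (by omega), if_neg (by omega), add_zero]
      · intro n
        rw [ih, vt_coeff]
        by_cases h : n = k
        · left; subst h; simp
        · right; rw [if_neg h]
  rw [← map_sum]
  refine TruncatedWittVector.ext fun i => ?_
  rw [WittVector.coeff_truncate, WittVector.coeff_truncate, key, if_pos i.2]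

end Aux
section Aux2

variable {p : ℕ} [hp : Fact p.Prime] {R : Type*} [CommRing R]
  {G H : Type*} [AddCommGroup G] [AddCommGroup H] {ι : G →+ H} {P : AddSubmonoid G}

theorem pLift_spec {x : H} (hx : x ∈ pDiv p ι P) :
    ι (pLift p ι P x : G) = p ^ uVal p ι P x • x := by
  have h : p ^ uVal p ι P x • x ∈ ι '' (P : Set G) := Nat.sInf_mem (s := {n : ℕ | p ^ n • x ∈ ι '' (P : Set G)}) hx
  unfold pLift
  rw [dif_pos h]
  exact ((Set.mem_image _ _ _).1 h).choose_spec.2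

theorem idx (hinj : Function.Injective ι) {x : H} (hx : x ∈ pDiv p ι P) {n : ℕ} {k : P}
    (h : p ^ n • x = ι (k : G)) :
    ∃ j, n = j + uVal p ι P x ∧ k = p ^ j • pLift p ι P x := by
  have hle : uVal p ι P x ≤ n := Nat.sInf_le (show n ∈ {n : ℕ | p ^ n • x ∈ ι '' (P : Set G)} from ⟨k, k.2, h.symm⟩)
  obtain ⟨j, rfl⟩ := Nat.exists_eq_add_of_le' hle
  refine ⟨j, rfl, ?_⟩
  apply Subtype.ext
  apply hinj
  rw [← h, AddSubmonoidClass.coe_nsmul, map_nsmul, pLift_spec hx, pow_add, mul_smul]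

theorem idx' {x : H} (hx : x ∈ pDiv p ι P) (j : ℕ) :
    p ^ (j + uVal p ι P x) • x = ι ((p ^ j • pLift p ι P x : P) : G) := by
  rw [AddSubmonoidClass.coe_nsmul, map_nsmul, pLift_spec hx, pow_add, mul_smul]

theorem bwitt_coeff_lt (η : WittVector p R) (x : H) {n : ℕ} (h : n < uVal p ι P x) :
    (bwitt p ι P η x).coeff n = 0 := viter_coeff_lt _ h

theorem bwitt_coeff_add (η : WittVector p R) (x : H) (j : ℕ) :
    (bwitt p ι P η x).coeff (j + uVal p ι P x) =
      AddMonoidAlgebra.single (p ^ j • pLift p ι P x) (η.coeff j) := by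
  unfold bwitt
  rw [WittVector.iterate_verschiebung_coeff, mul_teich, WittVector.coeff_mk, WittVector.map_coeff,
    AddMonoidAlgebra.single_pow, AddMonoidAlgebra.coe_algebraMap]
  simp [AddMonoidAlgebra.single_mul_single]

theorem bwitt_coeff_zero_of (η : WittVector p R) (x : H) {n : ℕ}
    (h : (((⇑(WittVector.verschiebung : WittVector p R →+ WittVector p R))^[uVal p ι P x]
            η)).coeff n = 0) : (bwitt p ι P η x).coeff n = 0 := by
  rcases lt_or_ge n (uVal p ι P x) with h' | h'
  · exact bwitt_coeff_lt η x h'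
  · obtain ⟨j, rfl⟩ := Nat.exists_eq_add_of_le' h'
    rw [WittVector.iterate_verschiebung_coeff] at h
    rw [bwitt_coeff_add, h, AddMonoidAlgebra.single_zero]

theorem bwitt_sub (η η' : WittVector p R) (x : H) :
    bwitt p ι P (η - η') x = bwitt p ι P η x - bwitt p ι P η' x := by
  unfold bwitt
  simp only [← viterHom_apply]
  rw [map_sub, sub_mul, map_sub]

theorem trunc_bwitt_zero {η : WittVector p R} {x : H} {m : ℕ}
    (h : (⇑(WittVector.verschiebung : WittVector p R →+ WittVector p R))^[uVal p ι P x] η ∈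
          Set.range (⇑(WittVector.verschiebung : WittVector p R →+ WittVector p R))^[m]) :
    WittVector.truncate m (bwitt p ι P η x) = 0 := by
  rw [truncate_eq_zero_iff]
  intro n hn
  exact bwitt_coeff_zero_of η x ((mem_range_viter _ _).1 h n hn)

theorem expansion_sum {η : {x : H // x ∈ pDiv p ι P} → WittVector p R}
    (m : ℕ) (S : Finset {x : H // x ∈ pDiv p ι P})
    (hS : ∀ x, (⇑(WittVector.verschiebung : WittVector p R →+ WittVector p R))^[uVal p ι P x.1]
            (η x) ∉
          Set.range
            (⇑(WittVector.verschiebung : WittVector p R →+ WittVector p R))^[m] → x ∈ S) :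
    ∑ᶠ x : {x : H // x ∈ pDiv p ι P}, WittVector.truncate m (bwitt p ι P (η x) x.1) =
      WittVector.truncate m (∑ x ∈ S, bwitt p ι P (η x) x.1) := by
  rw [map_sum]
  refine finsum_eq_sum_of_support_subset _ ?_
  intro x hx
  refine hS x fun h => hx ?_
  exact trunc_bwitt_zero h

theorem indep
    (hpi : ∀ n : ℕ, Function.Injective (fun h : H => p ^ n • h))
    {z : WittVector p (AddMonoidAlgebra R ↥P)}
    {η : {x : H // x ∈ pDiv p ι P} → WittVector p R}
    (h : IsBasicExpansion p ι P z η) (m : ℕ) (hz : WittVector.truncate m z = 0) :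
    ∀ x : {x : H // x ∈ pDiv p ι P},
          (⇑(WittVector.verschiebung : WittVector p R →+ WittVector p R))^[uVal p ι P x.1]
              (η x) ∈
            Set.range
              (⇑(WittVector.verschiebung : WittVector p R →+ WittVector p R))^[m] := by
  induction m with
  | zero => intro x; rw [mem_range_viter]; intro n hn; omega
  | succ m ih =>
    have hz' := hz
    rw [truncate_eq_zero_iff] at hz'
    have ih := ih ((truncate_eq_zero_iff _ _).2 fun n hn => hz' n (by omega))
    have hb : ∀ x : {x : H // x ∈ pDiv p ι P}, ∀ n < m, (bwitt p ι P (η x) x.1).coeff n = 0 :=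
      fun x n hn => bwitt_coeff_zero_of _ _ ((mem_range_viter _ _).1 (ih x) n hn)
    have hs := h.2 (m + 1)
    rw [expansion_sum (m + 1) (h.1 (m + 1)).toFinset (fun x hx => by simpa using hx), hz] at hs
    have hs1 := (truncate_eq_zero_iff _ _).1 hs.symm m (by omega)
    rw [coeff_sum_of_lt _ _ _ fun i _ => hb i] at hs1
    intro x
    by_contra hx
    have hxS : x ∈ (h.1 (m + 1)).toFinset := by simpa using hx
    apply hx
    rw [mem_range_viter]
    intro n hn
    rcases Nat.lt_succ_iff_lt_or_eq.1 hn with hn' | rfl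
    · exact (mem_range_viter _ _).1 (ih x) n hn'
    rcases lt_or_ge n (uVal p ι P x.1) with h' | h'
    · exact viter_coeff_lt _ h'
    obtain ⟨j, hj⟩ := Nat.exists_eq_add_of_le' h'
    have hs2 := congrArg (fun f => AddMonoidAlgebra.coeff f (p ^ j • pLift p ι P x.1)) hs1
    simp only [AddMonoidAlgebra.coeff_sum, Finsupp.finsetSum_apply] at hs2
    rw [Finset.sum_eq_single x] at hs2
    · rw [hj, bwitt_coeff_add] at hs2
      rw [hj, WittVector.iterate_verschiebung_coeff]
      simpa using hs2
    · intro y _ hy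
      rcases lt_or_ge n (uVal p ι P y.1) with h'' | h''
      · rw [bwitt_coeff_lt _ _ h'']; rfl
      obtain ⟨i, hi⟩ := Nat.exists_eq_add_of_le' h''
      rw [hi, bwitt_coeff_add, AddMonoidAlgebra.coeff_single]
      refine Finsupp.single_eq_of_ne ?_
      intro he
      apply hy
      apply Subtype.ext
      apply hpi n
      have e1 := idx' y.2 i
      have e2 := idx' x.2 j
      rw [← hi] at e1
      rw [← hj] at e2
      simp only
      rw [e1, e2, he]
    · intro hn; exact absurd hxS hn

/-- The remainders. -/
noncomputable def rem (z : WittVector p (AddMonoidAlgebra R ↥P)) :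
    ℕ → WittVector p (AddMonoidAlgebra R ↥P)
  | 0 => z
  | n + 1 => (rem z n - ∑ k ∈ ((rem z n).coeff 0).coeff.support,
      WittVector.teichmuller p (AddMonoidAlgebra.single k (((rem z n).coeff 0).coeff k))).shift 1

theorem rem_succ (z : WittVector p (AddMonoidAlgebra R ↥P)) (n : ℕ) :
    rem z n = WittVector.verschiebung (rem z (n + 1)) +
      ∑ k ∈ ((rem z n).coeff 0).coeff.support,
      WittVector.teichmuller p (AddMonoidAlgebra.single k (((rem z n).coeff 0).coeff k)) := by
  rw [← sub_eq_iff_eq_add]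
  have := WittVector.eq_iterate_verschiebung (p := p) (n := 1)
    (x := rem z n - ∑ k ∈ ((rem z n).coeff 0).coeff.support,
      WittVector.teichmuller p (AddMonoidAlgebra.single k (((rem z n).coeff 0).coeff k))) ?_
  · exact this
  · intro i hi
    obtain rfl : i = 0 := by omega
    rw [← WittVector.constantCoeff_apply, map_sub, map_sum]
    simp only [WittVector.constantCoeff_apply, WittVector.teichmuller_coeff_zero]
    rw [sub_eq_zero]
    exact (AddMonoidAlgebra.sum_coeff_single _).symm

theorem z_eq (z : WittVector p (AddMonoidAlgebra R ↥P)) (m : ℕ) :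
    z = viterHom p _ m (rem z m) + ∑ n ∈ Finset.range m,
      ∑ k ∈ ((rem z n).coeff 0).coeff.support,
      vt p n (AddMonoidAlgebra.single k (((rem z n).coeff 0).coeff k)) := by
  induction m with
  | zero => simp [viterHom_apply, rem]
  | succ m ih =>
    conv_lhs => rw [ih, rem_succ z m]
    rw [map_add, map_sum, Finset.sum_range_succ, viterHom_apply, viterHom_apply,
      Function.iterate_succ_apply]
    simp only [vt, viterHom_apply]
    abel

/-- The coefficients of the expansion. -/
noncomputable def etaOf (z : WittVector p (AddMonoidAlgebra R ↥P)) (ι : G →+ H)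
    (x : {x : H // x ∈ pDiv p ι P}) : WittVector p R :=
  WittVector.mk p fun j =>
    ((rem z (j + uVal p ι P x.1)).coeff 0).coeff (p ^ j • pLift p ι P x.1)

theorem exists_expansion (hinj : Function.Injective ι)
    (hpb : ∀ n : ℕ, Function.Bijective (fun h : H => p ^ n • h))
    (z : WittVector p (AddMonoidAlgebra R ↥P)) :
    IsBasicExpansion p ι P z (etaOf z ι) := by
  -- the point `k / p^n`
  have hex : ∀ (n : ℕ) (k : P), ∃ x : {x : H // x ∈ pDiv p ι P}, p ^ n • x.1 = ι (k : G) := by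
    intro n k
    obtain ⟨x, hx⟩ := (hpb n).2 (ι k)
    exact ⟨⟨x, n, k, k.2, hx.symm⟩, hx⟩
  choose ρ hρ using hex
  have hρu : ∀ n (k : P) (x : {x : H // x ∈ pDiv p ι P}), p ^ n • x.1 = ι (k : G) → x = ρ n k := by
    intro n k x hx
    apply Subtype.ext
    apply (hpb n).1
    simp only
    rw [hx, hρ]
  have hρi : ∀ n, Function.Injective (ρ n) := by
    intro n k k' h
    apply Subtype.ext
    apply hinj
    rw [← hρ n, ← hρ n, h]
  -- coefficients at `ρ n k`
  have hc1 : ∀ n k, (bwitt p ι P (etaOf z ι (ρ n k)) (ρ n k).1).coeff n =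
      AddMonoidAlgebra.single k (((rem z n).coeff 0).coeff k) := by
    intro n k
    obtain ⟨j, hj, hk⟩ := idx hinj (ρ n k).2 (hρ n k)
    generalize ρ n k = x at hj hk ⊢
    have := bwitt_coeff_add (ι := ι) (P := P) (etaOf z ι x) x.1 j
    rw [etaOf, WittVector.coeff_mk, ← hj, ← hk] at this
    exact this
  -- nonvanishing
  have hc2 : ∀ n (x : {x : H // x ∈ pDiv p ι P}),
      ((⇑(WittVector.verschiebung : WittVector p R →+ WittVector p R))^[uVal p ι P x.1]
        (etaOf z ι x)).coeff n ≠ 0 → ∃ k ∈ ((rem z n).coeff 0).coeff.support, ρ n k = x := by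
    intro n x h
    rcases lt_or_ge n (uVal p ι P x.1) with h' | h'
    · exact absurd (viter_coeff_lt _ h') h
    obtain ⟨j, rfl⟩ := Nat.exists_eq_add_of_le' h'
    rw [WittVector.iterate_verschiebung_coeff, etaOf, WittVector.coeff_mk] at h
    exact ⟨_, Finsupp.mem_support_iff.2 h, (hρu _ _ x (idx' x.2 j)).symm⟩
  let S : ℕ → Finset {x : H // x ∈ pDiv p ι P} := fun m =>
    (Finset.range m).biUnion fun n => ((rem z n).coeff 0).coeff.support.image (ρ n)
  have hS : ∀ m (x : {x : H // x ∈ pDiv p ι P}),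
      (⇑(WittVector.verschiebung : WittVector p R →+ WittVector p R))^[uVal p ι P x.1]
        (etaOf z ι x) ∉ Set.range
          (⇑(WittVector.verschiebung : WittVector p R →+ WittVector p R))^[m] → x ∈ S m := by
    intro m x hx
    rw [mem_range_viter] at hx
    push Not at hx
    obtain ⟨n, hn, hne⟩ := hx
    obtain ⟨k, hk, rfl⟩ := hc2 n x hne
    exact Finset.mem_biUnion.2 ⟨n, Finset.mem_range.2 hn, Finset.mem_image_of_mem _ hk⟩
  refine ⟨fun m => (S m).finite_toSet.subset fun x hx => hS m x hx, fun m => ?_⟩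
  rw [expansion_sum m (S m) (hS m), map_sum]
  simp_rw [fun x : {x : H // x ∈ pDiv p ι P} =>
    truncate_sum_vt (bwitt p ι P (etaOf z ι x) x.1) m]
  rw [Finset.sum_comm]
  conv_lhs => rw [z_eq z m]
  rw [map_add, (truncate_eq_zero_iff (viterHom p _ m (rem z m)) m).2
    (fun n hn => viter_coeff_lt _ hn), zero_add, map_sum]
  refine Finset.sum_congr rfl fun n hn => ?_
  rw [map_sum]
  have hsub : ((rem z n).coeff 0).coeff.support.image (ρ n) ⊆ S m :=
    Finset.subset_biUnion_of_mem (fun n => ((rem z n).coeff 0).coeff.support.image (ρ n)) hn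
  rw [← Finset.sum_subset hsub, Finset.sum_image fun a _ b _ h => hρi n h]
  · exact Finset.sum_congr rfl fun k _ => by rw [hc1]
  · intro x _ hx
    rw [bwitt_coeff_zero_of, vt_zero, map_zero]
    by_contra hne
    obtain ⟨k, hk, rfl⟩ := hc2 n x hne
    exact hx (Finset.mem_image_of_mem _ hk)

end Aux2

/-- Let `p` be a prime, `R` a `ℤ_(p)`-algebra and `P` an fs monoid
with `P^gp` torsion free.  Every `z ∈ W(R[P])` is uniquely a convergent sum of
`P`-basic Witt differentials of degree `0` (parametrized here by the family of the
`η_x` with `ξ_x = V^{u(x)} η_x`); moreover `z` lies in the kernel of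
`W(R[P]) → W_m(R[P])` if and only if all the coefficients `ξ_x` lie in
`V^m W(R)`. -/
theorem wittVector_unique_basic_expansion
    (p : ℕ) [Fact p.Prime] (R : Type*) [CommRing R]
    (hR : ∀ q : ℕ, q.Prime → q ≠ p → IsUnit (q : R))
    {G H : Type*} [AddCommGroup G] [AddCommGroup H]
    (hTF : ∀ (g : G) (n : ℕ), 0 < n → n • g = 0 → g = 0)
    (ι : G →+ H) (hloc : IsPLocalization p ι)
    (P : AddSubmonoid G)
    (hGen : AddSubgroup.closure (P : Set G) = ⊤)
    (hFG : AddMonoid.FG ↥P)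
    (hSat : ∀ g : G, ∀ n : ℕ, 0 < n → n • g ∈ P → g ∈ P)
    (z : WittVector p (AddMonoidAlgebra R ↥P)) :
    (∃! η : {x : H // x ∈ pDiv p ι P} → WittVector p R,
        IsBasicExpansion p ι P z η) ∧
    ∀ η : {x : H // x ∈ pDiv p ι P} → WittVector p R,
      IsBasicExpansion p ι P z η →
      ∀ m : ℕ, (WittVector.truncate m z = 0 ↔
        ∀ x : {x : H // x ∈ pDiv p ι P},
          (⇑(WittVector.verschiebung : WittVector p R →+ WittVector p R))^[uVal p ι P x.1]
              (η x) ∈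
            Set.range
              (⇑(WittVector.verschiebung : WittVector p R →+ WittVector p R))^[m]) := by
  have hinj : Function.Injective ι := by
    rw [injective_iff_map_eq_zero]
    intro g hg
    obtain ⟨n, hn⟩ := (hloc.ker_eq g).1 hg
    exact hTF g _ (pow_pos (Fact.out : p.Prime).pos n) hn
  have hpb : ∀ n : ℕ, Function.Bijective (fun h : H => p ^ n • h) := by
    intro n
    have : (fun h : H => p ^ n • h) = (fun h : H => p • h)^[n] := by
      rw [smul_iterate]
    rw [this]
    exact hloc.smul_bij.iterate n
  refine ⟨⟨etaOf z ι, exists_expansion hinj hpb z, ?_⟩, ?_⟩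
  · intro η hη
    have h0 := exists_expansion hinj hpb z
    have hd : IsBasicExpansion p ι P (0 : WittVector p (AddMonoidAlgebra R ↥P))
        (fun x => η x - etaOf z ι x) := by
      have hsub : ∀ m (x : {x : H // x ∈ pDiv p ι P}),
          (⇑(WittVector.verschiebung : WittVector p R →+ WittVector p R))^[uVal p ι P x.1]
            (η x - etaOf z ι x) ∉ Set.range
              (⇑(WittVector.verschiebung : WittVector p R →+ WittVector p R))^[m] →
          x ∈ (hη.1 m).toFinset ∪ (h0.1 m).toFinset := by
        intro m x hx
        by_contra hn
        simp only [Finset.mem_union, Set.Finite.mem_toFinset, Set.mem_ofPred_eq, not_or,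
          not_not] at hn
        obtain ⟨⟨a, ha⟩, ⟨b, hb⟩⟩ := hn
        refine hx ⟨a - b, ?_⟩
        rw [← viterHom_apply] at ha hb ⊢
        rw [← viterHom_apply] at ha hb ⊢
        rw [map_sub, map_sub, ha, hb]
      refine ⟨fun m => (Finset.finite_toSet _).subset fun x hx => hsub m x hx, fun m => ?_⟩
      have e1 := hη.2 m
      have e2 := h0.2 m
      rw [expansion_sum m ((hη.1 m).toFinset ∪ (h0.1 m).toFinset)] at e1 e2
      · rw [expansion_sum m _ (hsub m)]
        simp_rw [bwitt_sub]
        rw [Finset.sum_sub_distrib, map_sub, ← e1, ← e2, sub_self, map_zero]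
      · intro x hx
        exact Finset.mem_union_right _ (by simpa using hx)
      · intro x hx
        exact Finset.mem_union_left _ (by simpa using hx)
    funext x
    rw [← sub_eq_zero]
    ext n
    have := (mem_range_viter _ _).1
      (indep (fun n => (hpb n).1) hd (n + uVal p ι P x.1 + 1) (map_zero _) x)
      (n + uVal p ι P x.1) (by omega)
    rw [WittVector.iterate_verschiebung_coeff] at this
    rw [this, WittVector.zero_coeff]
  · intro η hη m
    refine ⟨indep (fun n => (hpb n).1) hη m, fun h => ?_⟩
    rw [hη.2 m]
    rw [finsum_congr fun x => trunc_bwitt_zero (h x), finsum_zero]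
end

section
/- Let p be a prime, R a ℤ_(p)-algebra, and P an fs monoid with P^gp torsion free. For all x₁, x₂ ∈ P[1/p], ξ₁ ∈ V^{u(x₁)}·W(R) and ξ₂ ∈ V^{u(x₂)}·W(R), there exists ξ ∈ V^{u(x₁+x₂)}·W(R) such that b(ξ₁, x₁)·b(ξ₂, x₂) = b(ξ, x₁ + x₂) in W(R[P]); that is, the product of two P-basic Witt differentials of degree 0 is again a P-basic Witt differential of degree 0. -/
open scoped Classical

namespace BWitt

open WittVector Function

theorem map_frob {p : ℕ} [Fact p.Prime] {R S : Type*} [CommRing R] [CommRing S]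
    (f : R →+* S) (x : WittVector p R) :
    WittVector.map f (frobenius x) = frobenius (WittVector.map f x) := by
  ext n
  simp only [map_coeff, coeff_frobenius, MvPolynomial.map_aeval, MvPolynomial.aeval_def,
    MvPolynomial.hom_eval₂]
  congr 1
  exact RingHom.ext_int _ _

theorem frob_teich_rat {p : ℕ} [Fact p.Prime] (x : MvPolynomial Unit ℚ) :
    frobenius (teichmuller p x) = teichmuller p (x ^ p) := by
  apply (ghostMap.bijective_of_invertible p (MvPolynomial Unit ℚ)).1
  ext1 n
  rw [ghostMap_apply, ghostMap_apply, ghostComponent_frobenius, ghostComponent_teichmuller,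
    ghostComponent_teichmuller, ← pow_mul, pow_succ']

theorem frob_teich {p : ℕ} [Fact p.Prime] {R : Type*} [CommRing R] (x : R) :
    frobenius (teichmuller p x) = teichmuller p (x ^ p) := by
  have h : frobenius (teichmuller p (MvPolynomial.X () : MvPolynomial Unit ℤ))
      = teichmuller p (MvPolynomial.X () ^ p) := by
    refine map_injective (MvPolynomial.map (Int.castRingHom ℚ))
      (MvPolynomial.map_injective _ Int.cast_injective) ?_
    rw [map_frob, map_teichmuller, map_teichmuller, frob_teich_rat, map_pow (MvPolynomial.map _)]
  have h2 := congrArg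
    (WittVector.map (MvPolynomial.eval₂Hom (Int.castRingHom R) (fun _ : Unit => x))) h
  rw [map_frob, map_teichmuller, map_teichmuller, map_pow (MvPolynomial.eval₂Hom _ _)] at h2
  simpa using h2

theorem iter_frob_teich {p : ℕ} [Fact p.Prime] {R : Type*} [CommRing R] (x : R) (n : ℕ) :
    frobenius^[n] (teichmuller p x) = teichmuller p (x ^ p ^ n) := by
  induction n with
  | zero => simp
  | succ n ih => rw [iterate_succ_apply', ih, frob_teich, ← pow_mul, pow_succ]

theorem iter_frob_map {p : ℕ} [Fact p.Prime] {R S : Type*} [CommRing R] [CommRing S]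
    (f : R →+* S) (x : WittVector p R) (n : ℕ) :
    frobenius^[n] (WittVector.map f x) = WittVector.map f (frobenius^[n] x) := by
  induction n with
  | zero => simp
  | succ n ih => rw [iterate_succ_apply', ih, iterate_succ_apply', map_frob]

theorem iter_ver_map {p : ℕ} [Fact p.Prime] {R S : Type*} [CommRing R] [CommRing S]
    (f : R →+* S) (x : WittVector p R) (n : ℕ) :
    verschiebung^[n] (WittVector.map f x) = WittVector.map f (verschiebung^[n] x) := by
  induction n with
  | zero => simp
  | succ n ih => rw [iterate_succ_apply', ih, iterate_succ_apply', map_verschiebung]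

theorem iter_frob_ver {p : ℕ} [Fact p.Prime] {R : Type*} [CommRing R]
    (x : WittVector p R) (n : ℕ) :
    frobenius^[n] (verschiebung^[n] x) = x * (p : WittVector p R) ^ n := by
  induction n with
  | zero => simp
  | succ n ih =>
    rw [iterate_succ_apply, iterate_succ_apply', frobenius_verschiebung, ← nsmul_eq_mul',
      ← RingHom.coe_pow, map_nsmul, RingHom.coe_pow, ih, nsmul_eq_mul', pow_succ, mul_assoc]

theorem key_mul {p : ℕ} [Fact p.Prime] {R S : Type*} [CommRing R] [CommRing S]
    (f : R →+* S) (α β : WittVector p R) (s t : S) (b c : ℕ) :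
    ∃ γ : WittVector p R,
      verschiebung^[b + c] (WittVector.map f α * teichmuller p s) *
        verschiebung^[b] (WittVector.map f β * teichmuller p t) =
      verschiebung^[b + c] (WittVector.map f γ * teichmuller p (s * t ^ p ^ c)) := by
  refine ⟨α * (frobenius^[c] β * (p : WittVector p R) ^ b), ?_⟩
  rw [iterate_verschiebung_mul_left, add_comm b c, iterate_add_apply frobenius c b,
    iter_frob_ver]
  congr 1
  have h1 : ∀ y z : WittVector p S,
      frobenius^[c] (y * z) = frobenius^[c] y * frobenius^[c] z := fun y z => by
    rw [← RingHom.coe_pow, map_mul]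
  have h2 : frobenius^[c] ((p : WittVector p S) ^ b) = (p : WittVector p S) ^ b := by
    rw [← RingHom.coe_pow, map_pow, map_natCast]
  rw [h1, h1, h2, iter_frob_teich, iter_frob_map]
  simp only [map_mul, map_pow, map_natCast]
  ring

theorem key_shift {p : ℕ} [Fact p.Prime] {R S : Type*} [CommRing R] [CommRing S]
    (f : R →+* S) (γ : WittVector p R) (t : S) (u d : ℕ) :
    verschiebung^[u + d] (WittVector.map f γ * teichmuller p (t ^ p ^ d)) =
      verschiebung^[u] (WittVector.map f (verschiebung^[d] γ) * teichmuller p t) := by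
  rw [iterate_add_apply, ← iter_frob_teich, ← iterate_verschiebung_mul_left, iter_ver_map]

section
variable {p : ℕ} {G H : Type*} [AddCommGroup G] [AddCommGroup H] {ι : G →+ H}
  {P : AddSubmonoid G}

theorem pLift_spec {x : H} (hx : x ∈ pDiv p ι P) :
    ι (pLift p ι P x : G) = p ^ uVal p ι P x • x := by
  have h : p ^ uVal p ι P x • x ∈ ι '' (P : Set G) := Nat.sInf_mem hx
  unfold pLift
  rw [dif_pos h]
  exact ((Set.mem_image _ _ _).1 h).choose_spec.2

theorem aux [Fact p.Prime] {R : Type*} [CommRing R] (hι : Injective ι)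
    {x₁ x₂ : H} (h₁ : x₁ ∈ pDiv p ι P) (h₂ : x₂ ∈ pDiv p ι P)
    (hle : uVal p ι P x₂ ≤ uVal p ι P x₁) (η₁ η₂ : WittVector p R) :
    x₁ + x₂ ∈ pDiv p ι P ∧
      ∃ η : WittVector p R,
        bwitt p ι P (R := R) η₁ x₁ * bwitt p ι P η₂ x₂ =
          bwitt p ι P η (x₁ + x₂) := by
  obtain ⟨c, hc⟩ := Nat.exists_eq_add_of_le hle
  have hsum : ι ((pLift p ι P x₁ + p ^ c • pLift p ι P x₂ : P) : G)
      = p ^ uVal p ι P x₁ • (x₁ + x₂) := by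
    push_cast
    rw [map_add, map_nsmul, pLift_spec h₁, pLift_spec h₂, smul_add, smul_smul, hc, ← pow_add,
      add_comm c]
  have hmem : p ^ uVal p ι P x₁ • (x₁ + x₂) ∈ ι '' (P : Set G) :=
    ⟨_, (pLift p ι P x₁ + p ^ c • pLift p ι P x₂ : P).2, hsum⟩
  have h₃ : x₁ + x₂ ∈ pDiv p ι P := ⟨_, hmem⟩
  refine ⟨h₃, ?_⟩
  have hu : uVal p ι P (x₁ + x₂) ≤ uVal p ι P x₁ := Nat.sInf_le hmem
  obtain ⟨d, hd⟩ := Nat.exists_eq_add_of_le hu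
  have heq : pLift p ι P x₁ + p ^ c • pLift p ι P x₂ = p ^ d • pLift p ι P (x₁ + x₂) := by
    apply Subtype.ext
    apply hι
    rw [hsum]
    push_cast
    rw [map_nsmul, pLift_spec h₃, smul_smul, hd, ← pow_add, add_comm d]
  obtain ⟨γ, hγ⟩ := key_mul (algebraMap R (AddMonoidAlgebra R P)) η₁ η₂
    (AddMonoidAlgebra.single (pLift p ι P x₁) (1 : R))
    (AddMonoidAlgebra.single (pLift p ι P x₂) (1 : R)) (uVal p ι P x₂) c
  refine ⟨verschiebung^[d] γ, ?_⟩
  unfold bwitt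
  rw [← key_shift, ← hd]
  rw [← hc] at hγ
  rw [hγ, AddMonoidAlgebra.single_pow, AddMonoidAlgebra.single_pow,
    AddMonoidAlgebra.single_mul_single, heq]
  simp

end

end BWitt

/-- Let `p` be a prime, `R` a `ℤ_(p)`-algebra, and `P` an fs
monoid with `P^gp` torsion free.  For `x₁, x₂ ∈ P[1/p]` and arbitrary coefficients
`ξᵢ = V^{u(xᵢ)} ηᵢ ∈ V^{u(xᵢ)} W(R)`, the product of the two `P`-basic Witt
differentials `b(ξ₁, x₁) · b(ξ₂, x₂)` is again a `P`-basic Witt differential of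
degree `0`, of weight `x₁ + x₂`. -/
theorem bwitt_mul_bwitt
    (p : ℕ) [Fact p.Prime] (R : Type*) [CommRing R]
    (hR : ∀ q : ℕ, q.Prime → q ≠ p → IsUnit (q : R))
    {G H : Type*} [AddCommGroup G] [AddCommGroup H]
    (hTF : ∀ (g : G) (n : ℕ), 0 < n → n • g = 0 → g = 0)
    (ι : G →+ H) (hloc : IsPLocalization p ι)
    (P : AddSubmonoid G)
    (hGen : AddSubgroup.closure (P : Set G) = ⊤)
    (hFG : AddMonoid.FG ↥P)
    (hSat : ∀ g : G, ∀ n : ℕ, 0 < n → n • g ∈ P → g ∈ P) :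
    ∀ x₁ ∈ pDiv p ι P, ∀ x₂ ∈ pDiv p ι P, ∀ η₁ η₂ : WittVector p R,
      x₁ + x₂ ∈ pDiv p ι P ∧
      ∃ η : WittVector p R,
        bwitt p ι P (R := R) η₁ x₁ * bwitt p ι P η₂ x₂ =
          bwitt p ι P η (x₁ + x₂) := by
  have hι : Function.Injective ι := by
    rw [injective_iff_map_eq_zero]
    intro g hg
    obtain ⟨n, hn⟩ := (hloc.ker_eq g).1 hg
    exact hTF g (p ^ n) (pow_pos (Fact.out : p.Prime).pos n) hn
  intro x₁ h₁ x₂ h₂ η₁ η₂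
  rcases le_total (uVal p ι P x₂) (uVal p ι P x₁) with h | h
  · exact BWitt.aux hι h₁ h₂ h η₁ η₂
  · have := BWitt.aux hι h₂ h₁ h η₂ η₁
    rw [add_comm x₁ x₂, mul_comm]
    exact this
end

section
/- Let p be a prime, R a ℤ_(p)-algebra, r ≥ 0, and A = R[T₁^{±1}, …, T_r^{±1}] the Laurent polynomial ring over R. Fix an admissible choice of total orders on the supports of weights. Then for each n ≥ 0, the p-basic elements ē(k, 𝒫), where (k, 𝒫) runs over all weights k and all partitions 𝒫 = (I_{−∞}, I₀, I₁, …, I_l) of k with l + |I_{−∞}| = n, form a basis of Ω^n_{A/R} as an R-module. -/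
open scoped Classical

set_option synthInstance.maxHeartbeats 1000000
set_option maxHeartbeats 1000000

/-- `T^m`, the canonical basis element of the Laurent polynomial ring
`R[T₁^{±1}, …, T_r^{±1}] = R[ℤ^r]` attached to `m ∈ ℤ^r`. -/
noncomputable def Tpow (R : Type*) [CommRing R] {r : ℕ} (m : Fin r → ℤ) :
    AddMonoidAlgebra R (Fin r → ℤ) :=
  AddMonoidAlgebra.single m 1

/-- `dlog T^m = T^{-m} · d(T^m) ∈ Ω¹_{A/R}` for `A = R[ℤ^r]`. -/
noncomputable def dlogT (R : Type*) [CommRing R] {r : ℕ} (m : Fin r → ℤ) :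
    Ω[AddMonoidAlgebra R (Fin r → ℤ)⁄R] :=
  Tpow R (-m) •
    (KaehlerDifferential.D R (AddMonoidAlgebra R (Fin r → ℤ)) (Tpow R m))

/-- `ord_p` of the value of a weight: `⊥` (i.e. `-∞`) at the symbol `p^{-∞}`
(encoded by `none`), and the `p`-adic valuation at a nonzero integer. -/
def ordWeight (p : ℕ) {r : ℕ} (k : Fin r → Option ℤ) (i : Fin r) : WithBot ℕ :=
  (k i).elim ⊥ fun z => (padicValInt p z : WithBot ℕ)

/-- `k⁺`, replacing the symbol `p^{-∞}` (encoded by `none`) by `0`. -/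
def kplus {r : ℕ} (k : Fin r → Option ℤ) : Fin r → ℤ := fun i => (k i).getD 0

/-- The support `supp k = {i | k_i ≠ 0}` of a weight. -/
def suppW {r : ℕ} (k : Fin r → Option ℤ) : Finset (Fin r) :=
  Finset.univ.filter fun i => k i ≠ some 0

/-- `I_{-∞}(k) = {i | k_i = p^{-∞}}`. -/
def infPart {r : ℕ} (k : Fin r → Option ℤ) : Finset (Fin r) :=
  Finset.univ.filter fun i => k i = none

/-- An admissible choice of total orders on the supports of weights: to each
weight `k` it assigns a relation `le k` which is a total order on `supp k` along
which `ord_p (k_i)` is nondecreasing. -/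
def Admissible (p r : ℕ) (le : (Fin r → Option ℤ) → Fin r → Fin r → Prop) : Prop :=
  ∀ k : Fin r → Option ℤ,
    (∀ i ∈ suppW k, le k i i) ∧
    (∀ i ∈ suppW k, ∀ j ∈ suppW k, le k i j → le k j i → i = j) ∧
    (∀ i ∈ suppW k, ∀ j ∈ suppW k, ∀ l ∈ suppW k, le k i j → le k j l → le k i l) ∧
    (∀ i ∈ suppW k, ∀ j ∈ suppW k, le k i j ∨ le k j i) ∧
    (∀ i ∈ suppW k, ∀ j ∈ suppW k, le k i j → ordWeight p k i ≤ ordWeight p k j)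

/-- A weight `k` together with a partition `𝒫 = (I_{-∞}, I₀, I₁, …, I_l)` of
`supp k` with `l + |I_{-∞}| = n`:  `I 0 = I₀` and `I j = I_j` for `1 ≤ j ≤ l`
are intervals of `supp k ∖ I_{-∞}(k)` (w.r.t. the chosen total order `le k`),
pairwise disjoint, covering `supp k` together with `I_{-∞}(k)`, with
`I₁, …, I_l` nonempty (`I₀` may be empty) and every element of `I_j` strictly
smaller than every element of `I_{j+1}`. -/
structure WeightPartition (p r n : ℕ)
    (le : (Fin r → Option ℤ) → Fin r → Fin r → Prop) where
  k : Fin r → Option ℤ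
  l : ℕ
  I : Fin (l + 1) → Finset (Fin r)
  deg_eq : l + (infPart k).card = n
  subset_supp : ∀ j, I j ⊆ suppW k
  not_inf : ∀ j, ∀ i ∈ I j, k i ≠ none
  interval : ∀ j, ∀ a ∈ I j, ∀ c ∈ I j, ∀ b ∈ suppW k,
    le k a b → le k b c → b ∈ I j
  disj : ∀ j j', j ≠ j' → Disjoint (I j) (I j')
  cover : ∀ i ∈ suppW k, k i = none ∨ ∃ j, i ∈ I j
  nonempty : ∀ j : Fin (l + 1), j ≠ 0 → (I j).Nonempty
  lt_succ : ∀ (j : ℕ) (hj : j + 1 < l + 1), ∀ a ∈ I ⟨j, Nat.lt_of_succ_lt hj⟩,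
    ∀ b ∈ I ⟨j + 1, hj⟩, le k a b ∧ a ≠ b

/-- `ord_p (k_I) = min_{i ∈ I} ord_p (k_i)` for a nonempty
`I ⊆ supp k ∖ I_{-∞}(k)`. -/
noncomputable def ordSet (p : ℕ) {r : ℕ} (k : Fin r → Option ℤ)
    (s : Finset (Fin r)) : ℕ :=
  sInf ((fun i => padicValInt p (kplus k i)) '' (s : Set (Fin r)))

/-- The exponent vector `p^{-ord_p(k_I)} · k_I`. -/
noncomputable def kIdiv (p : ℕ) {r : ℕ} (k : Fin r → Option ℤ)
    (s : Finset (Fin r)) : Fin r → ℤ :=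
  fun i => if i ∈ s then kplus k i / (p : ℤ) ^ ordSet p k s else 0

/-- The `p`-basic element `ē(k, 𝒫)`, as an element of the exterior algebra
`ExteriorAlgebra A (Ω¹_{A/R})` (it lies in the `n`-th exterior power
`⋀[A]^n Ω¹_{A/R}`):
`ē(k,𝒫) = T^{k⁺} · dlog T^{p^{-ord(k_{I₁})} k_{I₁}} ∧ ⋯ ∧
  dlog T^{p^{-ord(k_{I_l})} k_{I_l}} ∧ ⋀_{i ∈ I_{-∞}} dlog T_i`,
the last wedge being taken in increasing order of the index `i`. -/
noncomputable def pBasicElt (p : ℕ) {r n : ℕ} (R : Type*) [CommRing R]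
    {le : (Fin r → Option ℤ) → Fin r → Fin r → Prop}
    (w : WeightPartition p r n le) :
    ExteriorAlgebra (AddMonoidAlgebra R (Fin r → ℤ))
      (Ω[AddMonoidAlgebra R (Fin r → ℤ)⁄R]) :=
  Tpow R (kplus w.k) •
    ExteriorAlgebra.ιMulti (AddMonoidAlgebra R (Fin r → ℤ)) n
      (fun t =>
        Fin.append
          (fun j : Fin w.l => dlogT R (kIdiv p w.k (w.I j.succ)))
          (fun j : Fin (infPart w.k).card =>
            dlogT R (Pi.single
              ((Finset.orderIsoOfFin (infPart w.k) rfl j : {x // x ∈ infPart w.k}) :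
                Fin r) (1 : ℤ)))
          (Fin.cast w.deg_eq.symm t))

section PartOne
variable {R : Type*} [CommRing R] {r : ℕ}

lemma Tpow_mul (m m' : Fin r → ℤ) : Tpow R m * Tpow R m' = Tpow R (m + m') := by
  simp [Tpow, AddMonoidAlgebra.single_mul_single]

lemma Tpow_zero : Tpow R (0 : Fin r → ℤ) = 1 := rfl

lemma dlogT_add (m m' : Fin r → ℤ) :
    dlogT R (m + m') = dlogT R m + dlogT R m' := by
  unfold dlogT
  rw [← Tpow_mul m m', Derivation.leibniz, smul_add, smul_smul, smul_smul, Tpow_mul, Tpow_mul,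
    add_comm]
  congr 3 <;> abel

lemma D_Tpow (m : Fin r → ℤ) :
    KaehlerDifferential.D R (AddMonoidAlgebra R (Fin r → ℤ)) (Tpow R m) =
      Tpow R m • dlogT R m := by
  unfold dlogT
  rw [smul_smul, Tpow_mul, add_neg_cancel, Tpow_zero, one_smul]

noncomputable def dlogHom (R : Type*) [CommRing R] (r : ℕ) :
    (Fin r → ℤ) →+ Ω[AddMonoidAlgebra R (Fin r → ℤ)⁄R] :=
  AddMonoidHom.mk' (dlogT R) dlogT_add

lemma dlogT_sum (m : Fin r → ℤ) :
    dlogT R m = ∑ i, ((m i : ℤ) : AddMonoidAlgebra R (Fin r → ℤ)) •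
      dlogT R (Pi.single i (1 : ℤ)) := by
  have h : m = ∑ i, m i • (Pi.single i (1 : ℤ) : Fin r → ℤ) := by
    ext j
    simp [Finset.sum_apply, Pi.single_apply]
  have h2 := congrArg (dlogHom R r) h
  rw [map_sum] at h2
  simp only [map_zsmul] at h2
  refine h2.trans (Finset.sum_congr rfl fun i _ => ?_)
  rw [Int.cast_smul_eq_zsmul]
  rfl

noncomputable def thetaLin (R : Type*) [CommRing R] (r : ℕ) :
    AddMonoidAlgebra R (Fin r → ℤ) →ₗ[R] (Fin r → AddMonoidAlgebra R (Fin r → ℤ)) :=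
  (Finsupp.linearCombination R (fun m : Fin r → ℤ => fun i =>
    ((m i : ℤ) : AddMonoidAlgebra R (Fin r → ℤ)) * Tpow R m)) ∘ₗ
    (AddMonoidAlgebra.coeffLinearEquiv R).toLinearMap

lemma thetaLin_single (m : Fin r → ℤ) (a : R) (i : Fin r) :
    thetaLin R r (AddMonoidAlgebra.single m a) i =
      ((m i : ℤ) : AddMonoidAlgebra R (Fin r → ℤ)) * AddMonoidAlgebra.single m a := by
  have : thetaLin R r (AddMonoidAlgebra.single m a) = a • (fun i =>
    ((m i : ℤ) : AddMonoidAlgebra R (Fin r → ℤ)) * Tpow R m) :=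
    Finsupp.linearCombination_single R a m
  rw [this, Pi.smul_apply, ← mul_smul_comm, Tpow, AddMonoidAlgebra.smul_single, smul_eq_mul,
    mul_one]

noncomputable def thetaDer (R : Type*) [CommRing R] (r : ℕ) :
    Derivation R (AddMonoidAlgebra R (Fin r → ℤ)) (Fin r → AddMonoidAlgebra R (Fin r → ℤ)) :=
  Derivation.mk' (thetaLin R r) (by
    intro a b
    induction a using AddMonoidAlgebra.induction_linear with
    | zero => simp
    | add a a' h h' => simp only [add_mul, map_add, h, h', add_smul, smul_add]; abel
    | single m x =>
      induction b using AddMonoidAlgebra.induction_linear with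
      | zero => simp
      | add b b' h h' => simp only [mul_add, map_add, h, h', add_smul, smul_add]; abel
      | single m' y =>
        ext1 i
        change _ = AddMonoidAlgebra.single m x * thetaLin R r (AddMonoidAlgebra.single m' y) i +
          AddMonoidAlgebra.single m' y * thetaLin R r (AddMonoidAlgebra.single m x) i
        rw [AddMonoidAlgebra.single_mul_single, thetaLin_single,
          thetaLin_single, thetaLin_single, ← AddMonoidAlgebra.single_mul_single]
        simp only [Pi.add_apply, Int.cast_add]
        ring)

lemma theta_dlog (i : Fin r) :
    (thetaDer R r).liftKaehlerDifferential (dlogT R (Pi.single i (1 : ℤ))) = Pi.single i 1 := by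
  unfold dlogT
  rw [map_smul, Derivation.liftKaehlerDifferential_comp_D]
  ext1 j
  have : thetaDer R r (Tpow R (Pi.single i (1 : ℤ))) j = _ :=
    thetaLin_single (R := R) (Pi.single i (1 : ℤ)) 1 j
  rw [Pi.smul_apply, this, smul_eq_mul, mul_left_comm]
  change _ * (Tpow R _ * Tpow R _) = _
  rw [Tpow_mul, neg_add_cancel, Tpow_zero, mul_one]
  by_cases h : j = i
  · subst h; simp
  · simp [h]

noncomputable def omegaBasis (R : Type*) [CommRing R] (r : ℕ) :
    Module.Basis (Fin r) (AddMonoidAlgebra R (Fin r → ℤ)) (Ω[AddMonoidAlgebra R (Fin r → ℤ)⁄R]) :=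
  Module.Basis.mk (v := fun i => dlogT R (Pi.single i (1 : ℤ)))
    (by
      apply LinearIndependent.of_comp (thetaDer R r).liftKaehlerDifferential
      have := (Pi.basisFun (AddMonoidAlgebra R (Fin r → ℤ)) (Fin r)).linearIndependent
      have h2 : (⇑(thetaDer R r).liftKaehlerDifferential ∘
          fun i => dlogT R (Pi.single i (1 : ℤ))) =
          ⇑(Pi.basisFun (AddMonoidAlgebra R (Fin r → ℤ)) (Fin r)) := by
        funext i
        simp only [Function.comp_apply, theta_dlog, Pi.basisFun_apply]
      rw [h2]
      exact this)
    (by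
      rw [← KaehlerDifferential.span_range_derivation, Submodule.span_le]
      rintro _ ⟨a, rfl⟩
      induction a using AddMonoidAlgebra.induction_linear with
      | zero => simp
      | add a b ha hb => rw [map_add]; exact add_mem ha hb
      | single m x =>
        have : (AddMonoidAlgebra.single m x : AddMonoidAlgebra R (Fin r → ℤ)) = x • Tpow R m := by
          rw [Tpow, AddMonoidAlgebra.smul_single, smul_eq_mul, mul_one]
        rw [this, Derivation.map_smul, ← algebraMap_smul (AddMonoidAlgebra R (Fin r → ℤ)) x]
        apply Submodule.smul_mem
        rw [D_Tpow, dlogT_sum]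
        apply Submodule.smul_mem
        apply Submodule.sum_mem
        intro i _
        exact Submodule.smul_mem _ _ (Submodule.subset_span ⟨i, rfl⟩))

lemma omegaBasis_apply (i : Fin r) : omegaBasis R r i = dlogT R (Pi.single i (1 : ℤ)) := by
  simp [omegaBasis]

end PartOne

section PartTwo

lemma tri_basis {R M ι : Type*} [CommRing R] [AddCommGroup M] [Module R M]
    (b : Module.Basis ι R M) (ρ : ι → ℕ) (N : ℕ) (hN : ∀ x, ρ x ≤ N)
    (u : ι → R) (hu : ∀ w, IsUnit (u w)) (v : ι → M)
    (hv : ∀ w, v w - u w • b w ∈ Submodule.span R (b '' {x | ρ w < ρ x})) :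
    LinearIndependent R v ∧ Submodule.span R (Set.range v) = ⊤ := by
  have hz : ∀ w x, ρ x ≤ ρ w → b.repr (v w) x = u w * (if w = x then 1 else 0) := by
    intro w x hx
    have h1 : b.repr (v w - u w • b w) x = 0 := by
      have h2 := hv w
      rw [Module.Basis.mem_span_image] at h2
      by_contra h3
      have h4 := h2 (Finsupp.mem_support_iff.mpr h3)
      have h5 : ρ w < ρ x := h4
      omega
    rw [map_sub, map_smul, Finsupp.sub_apply, Finsupp.smul_apply, b.repr_self,
      Finsupp.single_apply, sub_eq_zero] at h1
    simpa using h1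
  constructor
  · rw [linearIndependent_iff]
    intro c hc
    by_contra hne
    obtain ⟨i, hi, hmin⟩ := Finset.exists_min_image c.support ρ
      (Finsupp.support_nonempty_iff.mpr hne)
    have h1 := congrArg (fun z => b.repr z i) hc
    simp only [Finsupp.linearCombination_apply, Finsupp.sum, map_sum, map_smul, map_zero,
      Finsupp.coe_finsetSum, Finset.sum_apply, Finsupp.smul_apply, Finsupp.zero_apply] at h1
    rw [Finset.sum_eq_single i] at h1
    · rw [hz i i le_rfl] at h1
      simp only [if_true, mul_one, smul_eq_mul] at h1
      exact (Finsupp.mem_support_iff.mp hi) ((hu i).mul_left_eq_zero.mp h1)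
    · intro j hj hji
      rw [hz j i (hmin j hj)]
      simp [hji]
    · intro h; exact absurd hi h
  · have key : ∀ d : ℕ, ∀ i, N - ρ i ≤ d → b i ∈ Submodule.span R (Set.range v) := by
      intro d
      induction d using Nat.strong_induction_on with
      | _ d ih =>
        intro i hi
        have h1 : v i - u i • b i ∈ Submodule.span R (Set.range v) := by
          refine (Submodule.span_le.mpr ?_) (hv i)
          rintro _ ⟨x, hx, rfl⟩
          have hx' : ρ i < ρ x := hx
          have := hN x
          exact ih (N - ρ x) (by omega) x le_rfl
        have h2 : u i • b i ∈ Submodule.span R (Set.range v) := by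
          have h3 : v i ∈ Submodule.span R (Set.range v) := Submodule.subset_span ⟨i, rfl⟩
          have := Submodule.sub_mem _ h3 h1
          simpa using this
        obtain ⟨y, hy⟩ := hu i
        have := Submodule.smul_mem _ ((y⁻¹ : Rˣ) : R) h2
        rwa [smul_smul, ← hy, Units.inv_mul, one_smul] at this
    rw [eq_top_iff, ← b.span_eq, Submodule.span_le]
    rintro _ ⟨i, rfl⟩
    exact key _ i le_rfl

lemma tri_exists {R A M G κ W : Type*} [CommRing R] [CommRing A] [Algebra R A]
    [AddCommGroup M] [Module A M] (bA : Module.Basis G R A) (b : Module.Basis κ A M)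
    (φ : W → G × κ) (hφ : Function.Bijective φ)
    (ρ : G × κ → ℕ) (N : ℕ) (hN : ∀ x, ρ x ≤ N)
    (u : W → R) (hu : ∀ w, IsUnit (u w)) (v : W → M)
    (hv : ∀ w, v w - algebraMap R A (u w) • bA (φ w).1 • b (φ w).2 ∈
      AddSubmonoid.closure
        {y | ∃ (c : R) (x : G × κ), ρ (φ w) < ρ x ∧ y = algebraMap R A c • bA x.1 • b x.2}) :
    ∀ ω : M, ∃! c : W →₀ R, ω = c.sum fun w a => algebraMap R A a • v w := by
  let _ : Module R M := Module.compHom M (algebraMap R A)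
  have hs : ∀ (a : R) (x : M), algebraMap R A a • x = a • x := fun a x => rfl
  have : IsScalarTower R A M := ⟨fun a x m => by
    rw [← hs, Algebra.smul_def, mul_smul]⟩
  let e : W ≃ G × κ := Equiv.ofBijective φ hφ
  let B := bA.smulTower b
  have hB : ∀ x, B x = bA x.1 • b x.2 := fun x => Module.Basis.smulTower_apply bA b x
  obtain ⟨h1, h2⟩ := tri_basis (B.reindex e.symm) (fun w => ρ (φ w)) N (fun w => hN _) u hu v (by
    intro w
    have h3 := hv w
    have h4 : (B.reindex e.symm) w = bA (φ w).1 • b (φ w).2 := by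
      rw [Module.Basis.reindex_apply, hB]; rfl
    rw [h4]
    have h5 : AddSubmonoid.closure
        {y | ∃ (c : R) (x : G × κ), ρ (φ w) < ρ x ∧ y = algebraMap R A c • bA x.1 • b x.2} ≤
        (Submodule.span R ((B.reindex e.symm) '' {x | ρ (φ w) < ρ (φ x)})).toAddSubmonoid := by
      rw [AddSubmonoid.closure_le]
      rintro _ ⟨c, x, hx, rfl⟩
      refine Submodule.smul_mem _ c (Submodule.subset_span ⟨e.symm x, ?_, ?_⟩)
      · have : φ (e.symm x) = x := e.apply_symm_apply x
        simpa [this] using hx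
      · rw [Module.Basis.reindex_apply, hB]; simp
    exact h5 h3)
  intro ω
  let V := Module.Basis.mk h1 h2.ge
  have hV : ∀ c : W →₀ R, (c.sum fun w a => algebraMap R A a • v w) = V.repr.symm c := by
    intro c
    rw [Module.Basis.repr_symm_apply, Finsupp.linearCombination_apply]
    simp [V, hs]
  refine ⟨V.repr ω, ?_, ?_⟩
  · simp only [hV]; simp
  · intro c hc
    simp only [hV] at hc
    rw [hc]; simp

lemma unit_of_int {R : Type*} [CommRing R] (p : ℕ)
    (hR : ∀ q : ℕ, q.Prime → q ≠ p → IsUnit (q : R)) (z : ℤ) (hz : ¬ (p : ℤ) ∣ z) :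
    IsUnit (z : R) := by
  have h1 : ∀ n : ℕ, ¬ p ∣ n → IsUnit (n : R) := by
    intro n
    induction n using Nat.recOnMul with
    | zero => intro h; exact absurd (dvd_zero p) h
    | one => intro _; simp
    | prime q hq => intro h; exact hR q hq (by rintro rfl; exact h dvd_rfl)
    | mul a b ha hb =>
      intro h
      rw [Nat.cast_mul]
      exact (ha fun h' => h (h'.mul_right b)).mul (hb fun h' => h (h'.mul_left a))
  have h2 := h1 z.natAbs (by rwa [Int.natCast_dvd] at hz)
  rcases Int.natAbs_eq z with h | h
  · rw [h]; simpa using h2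
  · rw [h]; simpa using h2

end PartTwo

section PartThree

variable {p r n : ℕ} {le : (Fin r → Option ℤ) → Fin r → Fin r → Prop}

noncomputable def rkW (le : (Fin r → Option ℤ) → Fin r → Fin r → Prop)
    (k : Fin r → Option ℤ) (i : Fin r) : ℕ :=
  ((suppW k).filter fun j => le k j i).card

lemma rkW_le (k : Fin r → Option ℤ) (i : Fin r) : rkW le k i ≤ r := by
  unfold rkW
  refine (Finset.card_le_univ _).trans ?_
  simp

lemma rkW_le_iff (hle : Admissible p r le) {k : Fin r → Option ℤ} {i j : Fin r}
    (hi : i ∈ suppW k) (hj : j ∈ suppW k) : le k i j ↔ rkW le k i ≤ rkW le k j := by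
  obtain ⟨hrefl, hanti, htrans, htot, -⟩ := hle k
  constructor
  · intro h
    apply Finset.card_le_card
    intro x hx
    rw [Finset.mem_filter] at hx ⊢
    exact ⟨hx.1, htrans x hx.1 i hi j hj hx.2 h⟩
  · intro h
    by_contra hn
    have hji := (htot i hi j hj).resolve_left hn
    have : rkW le k j < rkW le k i := by
      apply Finset.card_lt_card
      rw [Finset.ssubset_iff_of_subset]
      · exact ⟨i, Finset.mem_filter.mpr ⟨hi, hrefl i hi⟩, fun h' => hn (Finset.mem_filter.mp h').2⟩
      · intro x hx
        rw [Finset.mem_filter] at hx ⊢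
        exact ⟨hx.1, htrans x hx.1 j hj i hi hx.2 hji⟩
    omega

lemma rkW_inj (hle : Admissible p r le) {k : Fin r → Option ℤ} {i j : Fin r}
    (hi : i ∈ suppW k) (hj : j ∈ suppW k) (h : rkW le k i = rkW le k j) : i = j :=
  (hle k).2.1 i hi j hj ((rkW_le_iff hle hi hj).2 h.le) ((rkW_le_iff hle hj hi).2 h.ge)

lemma ne_none_of_rk (hle : Admissible p r le) {k : Fin r → Option ℤ} {i j : Fin r}
    (hi : i ∈ suppW k) (hj : j ∈ suppW k) (hn : k i ≠ none)
    (h : rkW le k i ≤ rkW le k j) : k j ≠ none := by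
  intro hj'
  have h1 := (hle k).2.2.2.2 i hi j hj ((rkW_le_iff hle hi hj).2 h)
  obtain ⟨z, hz⟩ := Option.ne_none_iff_exists'.mp hn
  simp [ordWeight, hj', hz] at h1

lemma mem_suppW {k : Fin r → Option ℤ} {i : Fin r} : i ∈ suppW k ↔ k i ≠ some 0 := by
  simp [suppW]

lemma mem_infPart {k : Fin r → Option ℤ} {i : Fin r} : i ∈ infPart k ↔ k i = none := by
  simp [infPart]

def kOf (m : Fin r → ℤ) (S : Finset (Fin r)) : Fin r → Option ℤ :=
  fun i => if m i = 0 ∧ i ∈ S then none else some (m i)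

lemma exists_st (w : WeightPartition p r n le) (j : Fin w.l) :
    ∃ i ∈ w.I j.succ, ∀ i' ∈ w.I j.succ, rkW le w.k i ≤ rkW le w.k i' :=
  Finset.exists_min_image _ _ (w.nonempty _ (Fin.succ_ne_zero j))

noncomputable def stW (w : WeightPartition p r n le) (j : Fin w.l) : Fin r :=
  (exists_st w j).choose

lemma stW_mem (w : WeightPartition p r n le) (j : Fin w.l) : stW w j ∈ w.I j.succ :=
  (exists_st w j).choose_spec.1

lemma stW_min (w : WeightPartition p r n le) (j : Fin w.l) :
    ∀ i' ∈ w.I j.succ, rkW le w.k (stW w j) ≤ rkW le w.k i' :=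
  (exists_st w j).choose_spec.2

noncomputable def infE (k : Fin r → Option ℤ) (j : Fin (infPart k).card) : Fin r :=
  ((Finset.orderIsoOfFin (infPart k) rfl j : {x // x ∈ infPart k}) : Fin r)

lemma infE_mem (k : Fin r → Option ℤ) (j : Fin (infPart k).card) : k (infE k j) = none :=
  mem_infPart.mp (Finset.orderIsoOfFin (infPart k) rfl j).2

lemma infE_inj (k : Fin r → Option ℤ) : Function.Injective (infE k) := by
  intro a b h
  exact (Finset.orderIsoOfFin (infPart k) rfl).injective (Subtype.ext h)

lemma infE_surj (k : Fin r → Option ℤ) (i : Fin r) (h : k i = none) : ∃ j, infE k j = i := by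
  obtain ⟨j, hj⟩ := (Finset.orderIsoOfFin (infPart k) rfl).surjective ⟨i, mem_infPart.mpr h⟩
  exact ⟨j, congrArg Subtype.val hj⟩

noncomputable def GW (w : WeightPartition p r n le) (t : Fin n) : Finset (Fin r) :=
  Fin.append (fun j : Fin w.l => w.I j.succ)
    (fun j : Fin (infPart w.k).card => {infE w.k j}) (Fin.cast w.deg_eq.symm t)

noncomputable def fW (w : WeightPartition p r n le) (t : Fin n) : Fin r :=
  Fin.append (stW w) (infE w.k) (Fin.cast w.deg_eq.symm t)

lemma cases_t (w : WeightPartition p r n le) {P : Fin n → Prop}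
    (h1 : ∀ j : Fin w.l, P (Fin.cast w.deg_eq (Fin.castAdd _ j)))
    (h2 : ∀ j : Fin (infPart w.k).card, P (Fin.cast w.deg_eq (Fin.natAdd _ j))) :
    ∀ t, P t := by
  intro t
  have : ∀ s : Fin (w.l + (infPart w.k).card), P (Fin.cast w.deg_eq s) :=
    fun s => Fin.addCases h1 h2 s
  simpa using this (Fin.cast w.deg_eq.symm t)

lemma GW_left (w : WeightPartition p r n le) (j : Fin w.l) :
    GW w (Fin.cast w.deg_eq (Fin.castAdd _ j)) = w.I j.succ := by
  simp [GW, Fin.append_left]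

lemma GW_right (w : WeightPartition p r n le) (j : Fin (infPart w.k).card) :
    GW w (Fin.cast w.deg_eq (Fin.natAdd _ j)) = {infE w.k j} := by
  simp [GW, Fin.append_right]

lemma fW_left (w : WeightPartition p r n le) (j : Fin w.l) :
    fW w (Fin.cast w.deg_eq (Fin.castAdd _ j)) = stW w j := by
  simp [fW, Fin.append_left]

lemma fW_right (w : WeightPartition p r n le) (j : Fin (infPart w.k).card) :
    fW w (Fin.cast w.deg_eq (Fin.natAdd _ j)) = infE w.k j := by
  simp [fW, Fin.append_right]

lemma fW_mem (w : WeightPartition p r n le) : ∀ t, fW w t ∈ GW w t := by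
  refine cases_t w ?_ ?_
  · intro j; rw [GW_left, fW_left]; exact stW_mem w j
  · intro j; rw [GW_right, fW_right]; simp

lemma fW_min (w : WeightPartition p r n le) :
    ∀ t, ∀ i ∈ GW w t, rkW le w.k (fW w t) ≤ rkW le w.k i := by
  refine cases_t w ?_ ?_
  · intro j; rw [GW_left, fW_left]; exact stW_min w j
  · intro j; rw [GW_right, fW_right]; simp

lemma GW_supp (w : WeightPartition p r n le) : ∀ t, ∀ i ∈ GW w t, i ∈ suppW w.k := by
  refine cases_t w ?_ ?_
  · intro j; rw [GW_left]; exact fun i hi => w.subset_supp _ hi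
  · intro j; rw [GW_right]
    intro i hi
    rw [Finset.mem_singleton] at hi
    rw [hi, mem_suppW, infE_mem w.k]; simp

lemma GW_disj (w : WeightPartition p r n le) :
    ∀ t t', ∀ i ∈ GW w t, i ∈ GW w t' → t = t' := by
  refine cases_t w ?_ ?_
  · intro j
    refine cases_t w ?_ ?_
    · intro j' i hi hi'
      rw [GW_left] at hi hi'
      by_contra hne
      have : j.succ ≠ j'.succ := fun h => hne (by rw [Fin.succ_inj.mp h])
      exact Finset.disjoint_left.mp (w.disj _ _ this) hi hi'
    · intro j' i hi hi'
      rw [GW_left] at hi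
      rw [GW_right, Finset.mem_singleton] at hi'
      exact absurd (hi' ▸ infE_mem w.k j') (w.not_inf _ i hi)
  · intro j
    refine cases_t w ?_ ?_
    · intro j' i hi' hi
      rw [GW_left] at hi
      rw [GW_right, Finset.mem_singleton] at hi'
      exact absurd (hi' ▸ infE_mem w.k j) (w.not_inf _ i hi)
    · intro j' i hi hi'
      rw [GW_right, Finset.mem_singleton] at hi hi'
      rw [infE_inj w.k (hi.symm.trans hi')]

lemma choice_inj (w : WeightPartition p r n le) {f : Fin n → Fin r} (hf : ∀ t, f t ∈ GW w t) :
    Function.Injective f := by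
  intro a b h
  exact GW_disj w a b (f a) (hf a) (h ▸ hf b)

lemma kOf_choice (w : WeightPartition p r n le) {f : Fin n → Fin r} (hf : ∀ t, f t ∈ GW w t) :
    kOf (kplus w.k) (Finset.univ.image f) = w.k := by
  funext i
  unfold kOf kplus
  cases h : w.k i with
  | none =>
    obtain ⟨j, hj⟩ := infE_surj w.k i h
    have h1 := hf (Fin.cast w.deg_eq (Fin.natAdd _ j))
    rw [GW_right, Finset.mem_singleton, hj] at h1
    rw [if_pos]
    exact ⟨rfl, Finset.mem_image.mpr ⟨_, Finset.mem_univ _, h1⟩⟩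
  | some z =>
    rw [if_neg]
    · rfl
    · rintro ⟨h1, h2⟩
      obtain ⟨t, -, ht⟩ := Finset.mem_image.mp h2
      have h3 := GW_supp w t _ (hf t)
      rw [ht, mem_suppW, h] at h3
      exact h3 (congrArg some h1)

noncomputable def rhoW (le : (Fin r → Option ℤ) → Fin r → Fin r → Prop)
    (x : (Fin r → ℤ) × Set.powersetCard (Fin r) n) : ℕ :=
  ∑ i ∈ x.2.1, rkW le (kOf x.1 x.2.1) i

lemma rhoW_le (x : (Fin r → ℤ) × Set.powersetCard (Fin r) n) : rhoW le x ≤ n * r := by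
  unfold rhoW
  refine (Finset.sum_le_card_nsmul _ _ r fun i _ => rkW_le _ _).trans ?_
  have h : x.2.1.card = n := x.2.2
  rw [h, smul_eq_mul]

def imgF (f : Fin n → Fin r) (hf : Function.Injective f) : Set.powersetCard (Fin r) n :=
  ⟨Finset.univ.image f, by
    rw [Set.powersetCard.mem_iff, Finset.card_image_of_injective _ hf]; simp⟩

lemma rhoW_choice (w : WeightPartition p r n le) {f : Fin n → Fin r} (hf : ∀ t, f t ∈ GW w t) :
    rhoW le (kplus w.k, imgF f (choice_inj w hf)) = ∑ t, rkW le w.k (f t) := by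
  unfold rhoW
  simp only [imgF]
  rw [kOf_choice w hf, Finset.sum_image]
  intro a _ b _ h
  exact choice_inj w hf h

lemma rhoW_lt (hle : Admissible p r le) (w : WeightPartition p r n le) {f : Fin n → Fin r}
    (hf : ∀ t, f t ∈ GW w t) (hne : f ≠ fW w) :
    rhoW le (kplus w.k, imgF (fW w) (choice_inj w (fW_mem w))) <
      rhoW le (kplus w.k, imgF f (choice_inj w hf)) := by
  rw [rhoW_choice w hf, rhoW_choice w (fW_mem w)]
  apply Finset.sum_lt_sum
  · intro t _; exact fW_min w t _ (hf t)
  · obtain ⟨t, ht⟩ := Function.ne_iff.mp hne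
    refine ⟨t, Finset.mem_univ _, lt_of_le_of_ne (fW_min w t _ (hf t)) fun h => ht ?_⟩
    exact (rkW_inj hle (GW_supp w t _ (fW_mem w t)) (GW_supp w t _ (hf t)) h).symm

noncomputable def phiW (w : WeightPartition p r n le) :
    (Fin r → ℤ) × Set.powersetCard (Fin r) n :=
  (kplus w.k, imgF (fW w) (choice_inj w (fW_mem w)))

lemma mem_imgF_fW (w : WeightPartition p r n le) (i : Fin r) :
    i ∈ (Finset.univ.image (fW w)) ↔ (∃ a, stW w a = i) ∨ w.k i = none := by
  rw [Finset.mem_image]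
  constructor
  · rintro ⟨t, -, rfl⟩
    revert t
    refine cases_t w ?_ ?_
    · intro j; left; exact ⟨j, (fW_left w j).symm⟩
    · intro j; right; rw [fW_right]; exact infE_mem _ _
  · rintro (⟨a, rfl⟩ | h)
    · exact ⟨_, Finset.mem_univ _, fW_left w a⟩
    · obtain ⟨j, rfl⟩ := infE_surj w.k i h
      exact ⟨_, Finset.mem_univ _, fW_right w j⟩

lemma I_lt (hle : Admissible p r le) (w : WeightPartition p r n le) (a : ℕ) :
    ∀ (b : ℕ) (hb : b < w.l + 1) (hab : a < b), ∀ x ∈ w.I ⟨a, hab.trans hb⟩,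
      ∀ y ∈ w.I ⟨b, hb⟩, rkW le w.k x < rkW le w.k y := by
  intro b
  induction b with
  | zero => intro _ h; omega
  | succ b ih =>
    intro hb hab x hx y hy
    have step : ∀ z ∈ w.I ⟨b, Nat.lt_of_succ_lt hb⟩, rkW le w.k z < rkW le w.k y := by
      intro z hz
      obtain ⟨h1, h2⟩ := w.lt_succ b hb z hz y hy
      have hz' := w.subset_supp _ hz
      have hy' := w.subset_supp _ hy
      refine lt_of_le_of_ne ((rkW_le_iff hle hz' hy').1 h1) fun h => h2 (rkW_inj hle hz' hy' h)
    rcases Nat.lt_succ_iff_lt_or_eq.mp hab with h | h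
    · obtain ⟨z, hz⟩ := w.nonempty ⟨b, Nat.lt_of_succ_lt hb⟩ (by
        intro h0
        have := congrArg Fin.val h0
        simp at this
        omega)
      exact (ih (Nat.lt_of_succ_lt hb) h x hx z hz).trans (step z hz)
    · subst h; exact step x hx

noncomputable def cntW (le : (Fin r → Option ℤ) → Fin r → Fin r → Prop)
    (k : Fin r → Option ℤ) (S : Finset (Fin r)) (i : Fin r) : ℕ :=
  (S.filter fun s => k s ≠ none ∧ rkW le k s ≤ rkW le k i).card

lemma stW_inj (w : WeightPartition p r n le) : Function.Injective (stW w) := by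
  intro a b h
  have := choice_inj w (fW_mem w) (((fW_left w a).trans h).trans (fW_left w b).symm)
  simpa using this

lemma cntW_eq (hle : Admissible p r le) (w : WeightPartition p r n le) (j : Fin (w.l + 1))
    (i : Fin r) (hi : i ∈ w.I j) :
    cntW le w.k (Finset.univ.image (fW w)) i = j.val := by
  have h1 : ((Finset.univ.image (fW w)).filter
      fun s => w.k s ≠ none ∧ rkW le w.k s ≤ rkW le w.k i) =
      (Finset.univ.filter fun a : Fin w.l => a.val < j.val).image (stW w) := by
    ext s
    rw [Finset.mem_filter, mem_imgF_fW, Finset.mem_image]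
    constructor
    · rintro ⟨h | h, h2, h3⟩
      · obtain ⟨a, rfl⟩ := h
        refine ⟨a, ?_, rfl⟩
        rw [Finset.mem_filter]
        refine ⟨Finset.mem_univ _, ?_⟩
        by_contra h4
        have := I_lt hle w j.val (a.val + 1) (by omega) (by omega) i hi (stW w a) (stW_mem w a)
        omega
      · exact absurd h h2
    · rintro ⟨a, ha, rfl⟩
      have ha' := (Finset.mem_filter.mp ha).2
      refine ⟨Or.inl ⟨a, rfl⟩, w.not_inf _ _ (stW_mem w a), ?_⟩
      rcases Nat.lt_or_ge (a.val + 1) j.val with h | h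
      · exact (I_lt hle w (a.val + 1) j.val j.2 h _ (stW_mem w a) i hi).le
      · have : a.succ = j := Fin.ext (by rw [Fin.val_succ]; omega)
        exact stW_min w a i (this ▸ hi)
  unfold cntW
  rw [h1, Finset.card_image_of_injective _ (stW_inj w)]
  have := j.2
  rw [Fin.card_filter_val_lt]
  omega

lemma I_eq (hle : Admissible p r le) (w : WeightPartition p r n le) (j : Fin (w.l + 1)) :
    w.I j = Finset.univ.filter fun i => i ∈ suppW w.k ∧ w.k i ≠ none ∧
      cntW le w.k (Finset.univ.image (fW w)) i = j.val := by
  ext i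
  rw [Finset.mem_filter]
  constructor
  · intro hi
    exact ⟨Finset.mem_univ _, w.subset_supp _ hi, w.not_inf _ _ hi, cntW_eq hle w j i hi⟩
  · rintro ⟨-, h1, h2, h3⟩
    obtain ⟨j', hj'⟩ := (w.cover i h1).resolve_left h2
    have := cntW_eq hle w j' i hj'
    have : j' = j := Fin.ext (this.symm.trans h3)
    exact this ▸ hj'

lemma WP_ext {w w' : WeightPartition p r n le} (hk : w.k = w'.k)
    (hI : ∀ (j : ℕ) (h : j < w.l + 1) (h' : j < w'.l + 1), w.I ⟨j, h⟩ = w'.I ⟨j, h'⟩) : w = w' := by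
  obtain ⟨k, l, I, d, _, _, _, _, _, _, _⟩ := w
  obtain ⟨k', l', I', d', _, _, _, _, _, _, _⟩ := w'
  simp only at hk hI
  subst hk
  obtain rfl : l = l' := by omega
  obtain rfl : I = I' := by
    funext j
    exact hI j.1 j.2 j.2
  rfl

lemma phiW_inj (hle : Admissible p r le) :
    Function.Injective (phiW : WeightPartition p r n le → _) := by
  intro w w' h
  have h1 : kplus w.k = kplus w'.k := congrArg Prod.fst h
  have h2 : Finset.univ.image (fW w) = Finset.univ.image (fW w') :=
    congrArg Subtype.val (congrArg Prod.snd h)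
  have hk : w.k = w'.k := by
    rw [← kOf_choice w (fW_mem w), ← kOf_choice w' (fW_mem w'), h1, h2]
  apply WP_ext hk
  intro j hj hj'
  rw [I_eq hle w, I_eq hle w', hk, h2]

lemma kOf_none (m : Fin r → ℤ) (S : Finset (Fin r)) (i : Fin r) :
    kOf m S i = none ↔ m i = 0 ∧ i ∈ S := by
  unfold kOf; split_ifs with h <;> simp [h]

lemma kOf_supp (m : Fin r → ℤ) (S : Finset (Fin r)) (i : Fin r) :
    i ∈ suppW (kOf m S) ↔ m i ≠ 0 ∨ i ∈ S := by
  rw [mem_suppW]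
  unfold kOf; split_ifs with h
  · simp [h]
  · simp; tauto

lemma kplus_kOf (m : Fin r → ℤ) (S : Finset (Fin r)) : kplus (kOf m S) = m := by
  funext i
  unfold kplus kOf; split_ifs with h
  · simp [h]
  · simp

lemma phiW_surj (hle : Admissible p r le) :
    Function.Surjective (phiW : WeightPartition p r n le → _) := by
  rintro ⟨m, S, hS⟩
  rw [Set.powersetCard.mem_iff] at hS
  set k := kOf m S with hk
  have hnone : ∀ i, k i = none ↔ m i = 0 ∧ i ∈ S := kOf_none m S
  have hsupp : ∀ i, i ∈ suppW k ↔ m i ≠ 0 ∨ i ∈ S := kOf_supp m S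
  let S0 := S.filter fun i => m i ≠ 0
  let cnt : Fin r → ℕ := fun i => (S0.filter fun s => rkW le k s ≤ rkW le k i).card
  have hinf : infPart k = S.filter fun i => m i = 0 := by
    ext i; rw [mem_infPart, hnone, Finset.mem_filter, and_comm]
  have cnt_mono : ∀ a b, rkW le k a ≤ rkW le k b → cnt a ≤ cnt b := by
    intro a b h
    apply Finset.card_le_card
    intro x hx
    rw [Finset.mem_filter] at hx ⊢
    exact ⟨hx.1, hx.2.trans h⟩
  have cnt_lt : ∀ a, ∀ b ∈ S0, rkW le k a < rkW le k b → cnt a < cnt b := by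
    intro a b hb h
    apply Finset.card_lt_card
    rw [Finset.ssubset_iff_of_subset]
    · refine ⟨b, Finset.mem_filter.mpr ⟨hb, le_rfl⟩, fun h' => ?_⟩
      have := (Finset.mem_filter.mp h').2
      omega
    · intro x hx
      rw [Finset.mem_filter] at hx ⊢
      exact ⟨hx.1, hx.2.trans h.le⟩
  have cnt_le : ∀ a, cnt a ≤ S0.card := fun a => Finset.card_filter_le _ _
  have cnt_pos : ∀ a ∈ S0, 0 < cnt a := by
    intro a ha
    exact Finset.card_pos.mpr ⟨a, Finset.mem_filter.mpr ⟨ha, le_rfl⟩⟩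
  have hS0supp : ∀ a ∈ S0, a ∈ suppW k := fun a ha => (hsupp a).2 (Or.inr (Finset.mem_filter.mp ha).1)
  have cnt_inj : Set.InjOn cnt S0 := by
    intro a ha b hb h
    rcases lt_trichotomy (rkW le k a) (rkW le k b) with h1 | h1 | h1
    · have := cnt_lt a b hb h1; omega
    · exact rkW_inj hle (hS0supp a ha) (hS0supp b hb) h1
    · have := cnt_lt b a ha h1; omega
  have cnt_surj : ∀ j, 0 < j → j ≤ S0.card → ∃ a ∈ S0, cnt a = j := by
    intro j h1 h2
    have h3 : S0.image cnt = Finset.Icc 1 S0.card := by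
      apply Finset.eq_of_subset_of_card_le
      · intro x hx
        obtain ⟨a, ha, rfl⟩ := Finset.mem_image.mp hx
        exact Finset.mem_Icc.mpr ⟨cnt_pos a ha, cnt_le a⟩
      · rw [Finset.card_image_of_injOn cnt_inj]; simp
    have h4 : j ∈ S0.image cnt := by rw [h3, Finset.mem_Icc]; omega
    exact Finset.mem_image.mp h4
  let w : WeightPartition p r n le :=
    { k := k
      l := S0.card
      I := fun j => Finset.univ.filter fun i => m i ≠ 0 ∧ cnt i = j.val
      deg_eq := by
        rw [hinf, ← hS, add_comm]
        exact Finset.card_filter_add_card_filter_not _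
      subset_supp := by
        intro j i hi
        exact (hsupp i).2 (Or.inl (Finset.mem_filter.mp hi).2.1)
      not_inf := by
        intro j i hi h
        exact (Finset.mem_filter.mp hi).2.1 ((hnone i).1 h).1
      interval := by
        intro j a ha c hc b hb hab hbc
        have ha' := (Finset.mem_filter.mp ha).2
        have hc' := (Finset.mem_filter.mp hc).2
        have has : a ∈ suppW k := (hsupp a).2 (Or.inl ha'.1)
        have hcs : c ∈ suppW k := (hsupp c).2 (Or.inl hc'.1)
        rw [rkW_le_iff hle has hb] at hab
        rw [rkW_le_iff hle hb hcs] at hbc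
        have h1 := cnt_mono a b hab
        have h2 := cnt_mono b c hbc
        have h3 := ne_none_of_rk hle has hb (fun h => ha'.1 ((hnone a).1 h).1) hab
        refine Finset.mem_filter.mpr ⟨Finset.mem_univ _, fun h => h3 ((hnone b).2 ⟨h, ?_⟩), by omega⟩
        exact ((hsupp b).1 hb).resolve_left (fun h' => h' h)
      disj := by
        intro j j' hne
        rw [Finset.disjoint_left]
        intro i hi hi'
        exact hne (Fin.ext ((Finset.mem_filter.mp hi).2.2.symm.trans (Finset.mem_filter.mp hi').2.2))
      cover := by
        intro i hi
        by_cases h : m i = 0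
        · left
          exact (hnone i).2 ⟨h, ((hsupp i).1 hi).resolve_left (fun h' => h' h)⟩
        · right
          exact ⟨⟨cnt i, Nat.lt_succ_of_le (cnt_le i)⟩,
            Finset.mem_filter.mpr ⟨Finset.mem_univ _, h, rfl⟩⟩
      nonempty := by
        intro j hj
        have hj0 : j.val ≠ 0 := fun h => hj (Fin.ext h)
        obtain ⟨a, ha, h⟩ := cnt_surj j.val (by omega) (by omega)
        exact ⟨a, Finset.mem_filter.mpr ⟨Finset.mem_univ _, (Finset.mem_filter.mp ha).2, h⟩⟩
      lt_succ := by
        intro j hj a ha b hb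
        have ha' := (Finset.mem_filter.mp ha).2
        have hb' := (Finset.mem_filter.mp hb).2
        have has : a ∈ suppW k := (hsupp a).2 (Or.inl ha'.1)
        have hbs : b ∈ suppW k := (hsupp b).2 (Or.inl hb'.1)
        have h1 : cnt a = j := ha'.2
        have h2 : cnt b = j + 1 := hb'.2
        constructor
        · rw [rkW_le_iff hle has hbs]
          by_contra h
          have := cnt_mono b a (by omega)
          omega
        · rintro rfl; omega }
  refine ⟨w, ?_⟩
  refine Prod.ext (kplus_kOf m S) (Subtype.ext ?_)
  change Finset.univ.image (fW w) = S
  symm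
  apply Finset.eq_of_subset_of_card_le
  · intro s hs
    rw [mem_imgF_fW]
    by_cases h : m s = 0
    · right; exact (hnone s).2 ⟨h, hs⟩
    · left
      have hs0 : s ∈ S0 := Finset.mem_filter.mpr ⟨hs, h⟩
      have h1 := cnt_pos s hs0
      have h2 := cnt_le s
      let a : Fin w.l := ⟨cnt s - 1, show cnt s - 1 < S0.card by omega⟩
      have hsI : s ∈ w.I a.succ := by
        refine Finset.mem_filter.mpr ⟨Finset.mem_univ _, h, ?_⟩
        change cnt s = cnt s - 1 + 1
        omega
      refine ⟨a, ?_⟩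
      have h3 := stW_min w a s hsI
      have h4 := stW_mem w a
      have h5 : cnt (stW w a) = cnt s - 1 + 1 := (Finset.mem_filter.mp h4).2.2
      apply rkW_inj (k := k) hle (w.subset_supp _ h4) (w.subset_supp _ hsI)
      rcases Nat.lt_or_ge (rkW le k (stW w a)) (rkW le k s) with h6 | h6
      · have := cnt_lt _ s hs0 h6; omega
      · exact le_antisymm h3 h6
  · rw [Finset.card_image_of_injective _ (choice_inj w (fW_mem w)), hS]; simp

end PartThree

section PartFour

variable {p r n : ℕ} {le : (Fin r → Option ℤ) → Fin r → Fin r → Prop}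

lemma not_dvd_div (hp : p.Prime) (z : ℤ) (hz : z ≠ 0) :
    ¬ (p : ℤ) ∣ z / (p : ℤ) ^ padicValInt p z := by
  have : Fact p.Prime := ⟨hp⟩
  intro h
  have h1 : (p : ℤ) ^ padicValInt p z ∣ z := padicValInt_dvd z
  obtain ⟨c, hc⟩ := h
  have h2 : z = (p : ℤ) ^ (padicValInt p z + 1) * c := by
    conv_lhs => rw [← Int.mul_ediv_cancel' h1, hc]
    ring
  have h3 : (p : ℤ) ^ (padicValInt p z + 1) ∣ z := ⟨c, h2⟩
  rw [padicValInt_dvd_iff] at h3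
  rcases h3 with h3 | h3
  · exact hz h3
  · omega

noncomputable def mvW (w : WeightPartition p r n le) (t : Fin n) : Fin r → ℤ :=
  Fin.append (fun j : Fin w.l => kIdiv p w.k (w.I j.succ))
    (fun j : Fin (infPart w.k).card => (Pi.single (infE w.k j) (1 : ℤ) : Fin r → ℤ))
    (Fin.cast w.deg_eq.symm t)

lemma mvW_left (w : WeightPartition p r n le) (j : Fin w.l) :
    mvW w (Fin.cast w.deg_eq (Fin.castAdd _ j)) = kIdiv p w.k (w.I j.succ) := by
  simp [mvW, Fin.append_left]

lemma mvW_right (w : WeightPartition p r n le) (j : Fin (infPart w.k).card) :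
    mvW w (Fin.cast w.deg_eq (Fin.natAdd _ j)) = Pi.single (infE w.k j) (1 : ℤ) := by
  simp [mvW, Fin.append_right]

lemma mvW_supp (w : WeightPartition p r n le) : ∀ t, ∀ i, i ∉ GW w t → mvW w t i = 0 := by
  refine cases_t w ?_ ?_
  · intro j i hi
    rw [GW_left] at hi
    rw [mvW_left, kIdiv, if_neg hi]
  · intro j i hi
    rw [GW_right, Finset.mem_singleton] at hi
    rw [mvW_right, Pi.single_eq_of_ne hi]

lemma mvW_unit (hp : p.Prime) (hle : Admissible p r le) (w : WeightPartition p r n le) :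
    ∀ t, ¬ (p : ℤ) ∣ mvW w t (fW w t) := by
  refine cases_t w ?_ ?_
  · intro j
    rw [mvW_left, fW_left, kIdiv, if_pos (stW_mem w j)]
    have hst := w.subset_supp _ (stW_mem w j)
    have hval : ∀ i ∈ w.I j.succ, w.k i = some (kplus w.k i) := by
      intro i hi
      obtain ⟨z, hz⟩ := Option.ne_none_iff_exists'.mp (w.not_inf _ i hi)
      simp [kplus, hz]
    have h0 : kplus w.k (stW w j) ≠ 0 := by
      intro h
      have := hval _ (stW_mem w j)
      rw [h] at this
      exact (mem_suppW.mp hst) this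
    have h1 : ordSet p w.k (w.I j.succ) = padicValInt p (kplus w.k (stW w j)) := by
      unfold ordSet
      apply le_antisymm
      · exact Nat.sInf_le ⟨stW w j, stW_mem w j, rfl⟩
      · apply le_csInf
        · exact ⟨_, stW w j, stW_mem w j, rfl⟩
        · rintro _ ⟨i, hi, rfl⟩
          have hi' : i ∈ w.I j.succ := hi
          have his := w.subset_supp _ hi'
          have h2 := (hle w.k).2.2.2.2 _ hst i his
            ((rkW_le_iff hle hst his).2 (stW_min w j i hi'))
          unfold ordWeight at h2
          rw [hval _ (stW_mem w j), hval i hi'] at h2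
          simpa using h2
    rw [h1]
    exact not_dvd_div hp _ h0
  · intro j
    rw [mvW_right, fW_right, Pi.single_eq_same]
    intro h
    have := Int.eq_one_of_dvd_one (by positivity) h
    exact hp.one_lt.ne' (by exact_mod_cast this)

lemma perm_sign {A M : Type*} [CommRing A] [AddCommGroup M] [Module A M]
    (e : Module.Basis (Fin r) A M) (f : Fin n → Fin r) (hf : Function.Injective f) :
    ∃ ε : ℤˣ, exteriorPower.ιMulti A n (fun t => e (f t)) =
      (((ε : ℤˣ) : ℤ) : A) • (e.exteriorPower n (imgF f hf)) := by
  have h1 : ∀ t, ∃ s, Set.powersetCard.ofFinEmbEquiv.symm (imgF f hf) s = f t := by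
    intro t
    have h2 : f t ∈ imgF f hf :=
      Finset.mem_image.mpr ⟨t, Finset.mem_univ _, rfl⟩
    exact (Set.powersetCard.mem_range_ofFinEmbEquiv_symm_iff_mem _ _).mpr h2
  choose σ hσ using h1
  have hinj : Function.Injective σ := by
    intro a b h
    apply hf
    rw [← hσ, ← hσ, h]
  let τ : Equiv.Perm (Fin n) := Equiv.ofBijective σ (Finite.injective_iff_bijective.mp hinj)
  refine ⟨Equiv.Perm.sign τ, ?_⟩
  rw [exteriorPower.basis_apply, exteriorPower.ιMulti_family]
  have h3 := AlternatingMap.map_perm (exteriorPower.ιMulti A n (M := M))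
    (e ∘ (Set.powersetCard.ofFinEmbEquiv.symm (imgF f hf))) τ
  have h4 : (fun t => e (f t)) =
      (e ∘ (Set.powersetCard.ofFinEmbEquiv.symm (imgF f hf))) ∘ τ := by
    funext t
    simp only [Function.comp_apply]
    rw [← hσ t]
    rfl
  rw [h4, h3]
  rcases Int.units_eq_one_or (Equiv.Perm.sign τ) with hs | hs
  · rw [hs]; simp
  · rw [hs]
    simp only [Units.neg_smul, one_smul, Units.val_neg, Units.val_one, Int.cast_neg, Int.cast_one]
    apply Subtype.ext
    rw [Submodule.coe_neg, Submodule.coe_smul, neg_one_smul]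

noncomputable def epsW {R : Type*} [CommRing R] (f : Fin n → Fin r) (hf : Function.Injective f) :
    ℤˣ := (perm_sign (omegaBasis R r) f hf).choose

lemma epsW_spec {R : Type*} [CommRing R] (f : Fin n → Fin r) (hf : Function.Injective f) :
    exteriorPower.ιMulti _ n (fun t => omegaBasis R r (f t)) =
      (((epsW (R := R) f hf : ℤˣ) : ℤ) : AddMonoidAlgebra R (Fin r → ℤ)) •
        ((omegaBasis R r).exteriorPower n (imgF f hf)) :=
  (perm_sign (omegaBasis R r) f hf).choose_spec

noncomputable def vW (R : Type*) [CommRing R] (w : WeightPartition p r n le) :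
    ⋀[AddMonoidAlgebra R (Fin r → ℤ)]^n (Ω[AddMonoidAlgebra R (Fin r → ℤ)⁄R]) :=
  Tpow R (kplus w.k) • exteriorPower.ιMulti (AddMonoidAlgebra R (Fin r → ℤ)) n
    (fun t => dlogT R (mvW w t))

lemma vW_coe (R : Type*) [CommRing R] (w : WeightPartition p r n le) :
    (vW R w : ExteriorAlgebra (AddMonoidAlgebra R (Fin r → ℤ))
      (Ω[AddMonoidAlgebra R (Fin r → ℤ)⁄R])) = pBasicElt p R w := by
  unfold vW pBasicElt
  rw [Submodule.coe_smul, exteriorPower.ιMulti_apply_coe]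
  congr 2
  funext t
  revert t
  refine cases_t w ?_ ?_
  · intro j
    rw [mvW_left]
    simp [Fin.append_left]
  · intro j
    rw [mvW_right]
    simp [Fin.append_right, infE]

noncomputable def coW (R : Type*) [CommRing R] (w : WeightPartition p r n le)
    (f : Fin n → Fin r) (hf : Function.Injective f) : R :=
  (∏ t, ((mvW w t (f t) : ℤ) : R)) * (((epsW (R := R) f hf : ℤˣ) : ℤ) : R)

lemma vW_expand (R : Type*) [CommRing R] (w : WeightPartition p r n le) :
    vW R w = ∑ f ∈ Fintype.piFinset (GW w), Tpow R (kplus w.k) •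
      (∏ t, ((mvW w t (f t) : ℤ) : AddMonoidAlgebra R (Fin r → ℤ))) •
        exteriorPower.ιMulti _ n (fun t => omegaBasis R r (f t)) := by
  unfold vW
  rw [← Finset.smul_sum]
  congr 1
  have h1 : (fun t => dlogT R (mvW w t)) = fun t => ∑ i ∈ GW w t,
      ((mvW w t i : ℤ) : AddMonoidAlgebra R (Fin r → ℤ)) • omegaBasis R r i := by
    funext t
    rw [dlogT_sum]
    symm
    simp only [omegaBasis_apply]
    apply Finset.sum_subset (Finset.subset_univ _)
    intro i _ hi
    rw [mvW_supp w t i hi]; simp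
  rw [h1]
  refine (MultilinearMap.map_sum_finset (exteriorPower.ιMulti (AddMonoidAlgebra R (Fin r → ℤ)) n
    (M := Ω[AddMonoidAlgebra R (Fin r → ℤ)⁄R])).toMultilinearMap _ _).trans ?_
  refine Finset.sum_congr rfl fun f _ => ?_
  exact MultilinearMap.map_smul_univ _ _ _

lemma term_eq (R : Type*) [CommRing R] (w : WeightPartition p r n le)
    (f : Fin n → Fin r) (hf : Function.Injective f) :
    Tpow R (kplus w.k) •
      (∏ t, ((mvW w t (f t) : ℤ) : AddMonoidAlgebra R (Fin r → ℤ))) •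
        exteriorPower.ιMulti _ n (fun t => omegaBasis R r (f t)) =
    algebraMap R (AddMonoidAlgebra R (Fin r → ℤ)) (coW R w f hf) •
      Tpow R (kplus w.k) • ((omegaBasis R r).exteriorPower n (imgF f hf)) := by
  rw [epsW_spec f hf]
  simp only [smul_smul]
  congr 1
  unfold coW
  simp only [map_mul, map_prod, map_intCast]
  ring

lemma tail_mem (R : Type*) [CommRing R] (hle : Admissible p r le)
    (w : WeightPartition p r n le) :
    vW R w - algebraMap R (AddMonoidAlgebra R (Fin r → ℤ))
        (coW R w (fW w) (choice_inj w (fW_mem w))) •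
      (AddMonoidAlgebra.basis (Fin r → ℤ) R) (phiW w).1 •
        ((omegaBasis R r).exteriorPower n (phiW w).2) ∈
      AddSubmonoid.closure
        {y | ∃ (c : R) (x : (Fin r → ℤ) × Set.powersetCard (Fin r) n),
          rhoW le (phiW w) < rhoW le x ∧
          y = algebraMap R (AddMonoidAlgebra R (Fin r → ℤ)) c •
            (AddMonoidAlgebra.basis (Fin r → ℤ) R) x.1 •
              ((omegaBasis R r).exteriorPower n x.2)} := by
  have hb : ∀ m : Fin r → ℤ, AddMonoidAlgebra.basis (Fin r → ℤ) R m = Tpow R m := by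
    intro m; simp [Tpow]
  have hmem : fW w ∈ Fintype.piFinset (GW w) := Fintype.mem_piFinset.mpr (fW_mem w)
  rw [vW_expand, ← Finset.add_sum_erase _ _ hmem, term_eq R w _ (choice_inj w (fW_mem w)), hb]
  change _ + _ - algebraMap R (AddMonoidAlgebra R (Fin r → ℤ)) _ • Tpow R (kplus w.k) •
    ((omegaBasis R r).exteriorPower n (imgF (fW w) (choice_inj w (fW_mem w)))) ∈ _
  rw [add_sub_cancel_left]
  apply AddSubmonoid.sum_mem
  intro f hf
  rw [Finset.mem_erase, Fintype.mem_piFinset] at hf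
  apply AddSubmonoid.subset_closure
  refine ⟨coW R w f (choice_inj w hf.2), (kplus w.k, imgF f (choice_inj w hf.2)),
    rhoW_lt hle w hf.2 hf.1, ?_⟩
  rw [term_eq R w f (choice_inj w hf.2), hb]

lemma coW_unit (R : Type*) [CommRing R] (hp : p.Prime)
    (hR : ∀ q : ℕ, q.Prime → q ≠ p → IsUnit (q : R)) (hle : Admissible p r le)
    (w : WeightPartition p r n le) :
    IsUnit (coW R w (fW w) (choice_inj w (fW_mem w))) := by
  unfold coW
  apply IsUnit.mul
  · apply IsUnit.prod_univ_iff.mpr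
    intro t
    exact unit_of_int p hR _ (mvW_unit hp hle w t)
  · exact (Units.isUnit _).map (Int.castRingHom R)

end PartFour

/-- Let `p` be a prime, `R` a `ℤ_(p)`-algebra, `r ≥ 0`, and
`A = R[T₁^{±1}, …, T_r^{±1}]` the Laurent polynomial ring.  Fix an admissible
choice of total orders on the supports of weights.  Then for each `n ≥ 0` the
`p`-basic elements `ē(k, 𝒫)`, where `(k, 𝒫)` runs over all weights `k` and all
partitions `𝒫 = (I_{-∞}, I₀, I₁, …, I_l)` of `k` with `l + |I_{-∞}| = n`, form
a basis of `Ω^n_{A/R} = ⋀[A]^n Ω¹_{A/R}` as an `R`-module:  each of them lies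
in `⋀[A]^n Ω¹_{A/R}`, and every element of `⋀[A]^n Ω¹_{A/R}` is uniquely a
finite `R`-linear combination of them. -/
theorem pBasic_basis
    (p r n : ℕ) (hp : p.Prime) (R : Type*) [CommRing R]
    (hR : ∀ q : ℕ, q.Prime → q ≠ p → IsUnit (q : R))
    (le : (Fin r → Option ℤ) → Fin r → Fin r → Prop)
    (hle : Admissible p r le) :
    (∀ w : WeightPartition p r n le,
        pBasicElt p R w ∈
          ⋀[AddMonoidAlgebra R (Fin r → ℤ)]^n
            (Ω[AddMonoidAlgebra R (Fin r → ℤ)⁄R])) ∧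
    ∀ ω ∈ ⋀[AddMonoidAlgebra R (Fin r → ℤ)]^n
        (Ω[AddMonoidAlgebra R (Fin r → ℤ)⁄R]),
      ∃! c : WeightPartition p r n le →₀ R,
        ω = c.sum fun w a =>
          algebraMap R (AddMonoidAlgebra R (Fin r → ℤ)) a • pBasicElt p R w := by
  refine ⟨fun w => vW_coe R w ▸ (vW R w).2, fun ω hω => ?_⟩
  have key := tri_exists (AddMonoidAlgebra.basis (Fin r → ℤ) R) ((omegaBasis R r).exteriorPower n)
    (phiW : WeightPartition p r n le → _) ⟨phiW_inj hle, phiW_surj hle⟩ (rhoW le) (n * r) rhoW_le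
    (fun w => coW R w (fW w) (choice_inj w (fW_mem w))) (fun w => coW_unit R hp hR hle w)
    (vW R) (fun w => tail_mem R hle w) ⟨ω, hω⟩
  have hiff : ∀ c : WeightPartition p r n le →₀ R,
      ((⟨ω, hω⟩ : ⋀[AddMonoidAlgebra R (Fin r → ℤ)]^n (Ω[AddMonoidAlgebra R (Fin r → ℤ)⁄R])) =
        c.sum fun w a => algebraMap R (AddMonoidAlgebra R (Fin r → ℤ)) a • vW R w) ↔
      ω = c.sum fun w a =>
          algebraMap R (AddMonoidAlgebra R (Fin r → ℤ)) a • pBasicElt p R w := by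
    intro c
    rw [Subtype.ext_iff]
    simp only [Finsupp.sum, Submodule.coe_sum, Submodule.coe_smul, vW_coe]
  simpa only [hiff] using key
end

section
/- Let p be a prime and f: Q → P a p-quasi-saturated homomorphism of integral monoids such that P is p-saturated. Then for every x ∈ P whose image in P^gp/Q^gp is divisible by p (i.e., lies in p·(P^gp/Q^gp)), there exist r ∈ P and q ∈ Q with x = p·r + f(q). -/
theorem exists_sub_of_closure_eq_top {G : Type*} [AddCommGroup G] (M : AddSubmonoid G)
    (h : AddSubgroup.closure (M : Set G) = ⊤) (g : G) : ∃ a ∈ M, ∃ b ∈ M, g = a - b := by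
  have hg : g ∈ AddSubgroup.closure (M : Set G) := by rw [h]; trivial
  induction hg using AddSubgroup.closure_induction with
  | mem x hx => exact ⟨x, hx, 0, M.zero_mem, by simp⟩
  | zero => exact ⟨0, M.zero_mem, 0, M.zero_mem, by simp⟩
  | add x y _ _ hx hy =>
    obtain ⟨a, ha, b, hb, rfl⟩ := hx
    obtain ⟨c, hc, d, hd, rfl⟩ := hy
    exact ⟨a + c, M.add_mem ha hc, b + d, M.add_mem hb hd, by abel⟩
  | neg x _ hx =>
    obtain ⟨a, ha, b, hb, rfl⟩ := hx
    exact ⟨b, hb, a, ha, by abel⟩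

/-- Let `p` be a prime and `f : Q → P` a `p`-quasi-saturated
homomorphism of integral monoids with `P` `p`-saturated.  Monoids are modelled as
additive submonoids `Q ⊆ GQ = Q^gp`, `P ⊆ GP = P^gp` of the abelian groups they
generate, and `f` is the restriction of a group homomorphism `φ : GQ →+ GP`
(`φ = f^gp`).  Then for every `x ∈ P` whose image in `P^gp/Q^gp` is divisible by
`p` (i.e. `x = p • g + φ q` for some `g ∈ P^gp`, `q ∈ Q^gp`), there exist `r ∈ P`
and `q ∈ Q` with `x = p • r + φ q`. -/
theorem exists_p_smul_add_of_quasiSaturated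
    (p : ℕ) (hp : p.Prime)
    {GQ GP : Type*} [AddCommGroup GQ] [AddCommGroup GP]
    (Q : AddSubmonoid GQ) (P : AddSubmonoid GP)
    (φ : GQ →+ GP) (hmap : ∀ x ∈ Q, φ x ∈ P)
    (hQGen : AddSubgroup.closure (Q : Set GQ) = ⊤)
    (hPGen : AddSubgroup.closure (P : Set GP) = ⊤)
    (hpqs : ∀ r₁ ∈ P, ∀ r₂ ∈ P, ∀ q₁ ∈ Q, ∀ q₂ ∈ Q,
        p • (r₁ - r₂) + φ (q₁ - q₂) ∈ P →
        ∃ x : GQ, (r₁ - r₂) + φ x ∈ P ∧ (q₁ - q₂) - p • x ∈ Q)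
    (hPsat : ∀ g : GP, p • g ∈ P → g ∈ P) :
    ∀ x ∈ P, (∃ (g : GP) (q : GQ), x = p • g + φ q) →
      ∃ r ∈ P, ∃ q ∈ Q, x = p • r + φ q := by
  rintro x hx ⟨g, q, rfl⟩
  obtain ⟨r₁, hr₁, r₂, hr₂, rfl⟩ := exists_sub_of_closure_eq_top P hPGen g
  obtain ⟨q₁, hq₁, q₂, hq₂, rfl⟩ := exists_sub_of_closure_eq_top Q hQGen q
  obtain ⟨y, hy₁, hy₂⟩ := hpqs r₁ hr₁ r₂ hr₂ q₁ hq₁ q₂ hq₂ hx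
  refine ⟨_, hy₁, _, hy₂, ?_⟩
  rw [map_sub φ (q₁ - q₂), map_nsmul, smul_add]
  abel
end

section
/- Let p be a prime and f: Q → P a p-quasi-saturated homomorphism of integral monoids such that P is p-saturated and P^gp/Q^gp has no p-torsion. Then for every n ∈ ℕ and every x ∈ P whose image in P^gp/Q^gp is divisible by p^n (i.e., lies in p^n·(P^gp/Q^gp)), there exist r ∈ P and q ∈ Q with x = p^n·r + f(q). -/
theorem exists_sub_of_closure_top {G : Type*} [AddCommGroup G] (S : AddSubmonoid G)
    (h : AddSubgroup.closure (S : Set G) = ⊤) (g : G) :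
    ∃ a ∈ S, ∃ b ∈ S, g = a - b := by
  have hg : g ∈ AddSubgroup.closure (S : Set G) := by rw [h]; trivial
  induction hg using AddSubgroup.closure_induction with
  | mem x hx => exact ⟨x, hx, 0, S.zero_mem, by simp⟩
  | zero => exact ⟨0, S.zero_mem, 0, S.zero_mem, by simp⟩
  | add x y _ _ hx hy =>
    obtain ⟨a, ha, b, hb, rfl⟩ := hx
    obtain ⟨c, hc, d, hd, rfl⟩ := hy
    exact ⟨a + c, S.add_mem ha hc, b + d, S.add_mem hb hd, by abel⟩
  | neg x _ hx =>
    obtain ⟨a, ha, b, hb, rfl⟩ := hx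
    exact ⟨b, hb, a, ha, by abel⟩

/-- Let `p` be a prime and `f : Q → P` a `p`-quasi-saturated
homomorphism of integral monoids such that `P` is `p`-saturated and
`P^gp/Q^gp` has no `p`-torsion.  (Monoids are modelled as additive submonoids of
the abelian groups `GQ = Q^gp`, `GP = P^gp` they generate, `f` being the
restriction of `φ = f^gp : GQ →+ GP`.)  Then for every `n ∈ ℕ` and every `x ∈ P`
whose image in `P^gp/Q^gp` is divisible by `p^n`, there exist `r ∈ P` and `q ∈ Q`
with `x = p^n • r + φ q`. -/
theorem exists_pPow_smul_add_of_quasiSaturated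
    (p : ℕ) (hp : p.Prime)
    {GQ GP : Type*} [AddCommGroup GQ] [AddCommGroup GP]
    (Q : AddSubmonoid GQ) (P : AddSubmonoid GP)
    (φ : GQ →+ GP) (hmap : ∀ x ∈ Q, φ x ∈ P)
    (hQGen : AddSubgroup.closure (Q : Set GQ) = ⊤)
    (hPGen : AddSubgroup.closure (P : Set GP) = ⊤)
    (hpqs : ∀ r₁ ∈ P, ∀ r₂ ∈ P, ∀ q₁ ∈ Q, ∀ q₂ ∈ Q,
        p • (r₁ - r₂) + φ (q₁ - q₂) ∈ P →
        ∃ x : GQ, (r₁ - r₂) + φ x ∈ P ∧ (q₁ - q₂) - p • x ∈ Q)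
    (hPsat : ∀ g : GP, p • g ∈ P → g ∈ P)
    (hNoPTor : ∀ g : GP, p • g ∈ AddMonoidHom.range φ → g ∈ AddMonoidHom.range φ) :
    ∀ n : ℕ, ∀ x ∈ P, (∃ (g : GP) (q : GQ), x = p ^ n • g + φ q) →
      ∃ r ∈ P, ∃ q ∈ Q, x = p ^ n • r + φ q := by
  intro n
  induction n with
  | zero =>
    intro x hx _
    exact ⟨x, hx, 0, Q.zero_mem, by simp⟩
  | succ n ih =>
    rintro x hx ⟨g, q, hxe⟩
    obtain ⟨r₁, h1, r₂, h2, hr⟩ := exists_sub_of_closure_top P hPGen (p ^ n • g)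
    obtain ⟨q₁, h3, q₂, h4, hq⟩ := exists_sub_of_closure_top Q hQGen q
    have hxe' : x = p • (p ^ n • g) + φ q := by
      rw [hxe, smul_smul, pow_succ']
    obtain ⟨y, hy1, hy2⟩ := hpqs r₁ h1 r₂ h2 q₁ h3 q₂ h4 (by rw [← hr, ← hq, ← hxe']; exact hx)
    rw [← hr] at hy1
    rw [← hq] at hy2
    obtain ⟨r, hrP, s, hs, he⟩ := ih _ hy1 ⟨g, y, rfl⟩
    refine ⟨r, hrP, p • s + (q - p • y), Q.add_mem (Q.nsmul_mem hs p) hy2, ?_⟩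
    have e : x = p • (p ^ n • g + φ y) + φ (q - p • y) := by
      rw [hxe', smul_add, map_sub, map_nsmul]; abel
    rw [e, he, smul_add, smul_smul, ← pow_succ', map_add, map_nsmul, add_assoc]
end

section
/- Let p be a prime and f: Q → P a homomorphism of integral monoids such that P is p-saturated. Let P' be the image of P in G := P^gp/Q^gp. Then P' is p-saturated: every y ∈ G with p·y ∈ P' lies in P' (note that P' generates G, so G = (P')^gp). -/
/-- Let `p` be a prime and `f : Q → P` a homomorphism of integral
monoids with `P` `p`-saturated.  (Monoids are modelled as additive submonoids of the
abelian groups `GQ = Q^gp`, `GP = P^gp` they generate, `f` being the restriction of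
`φ = f^gp : GQ →+ GP`.)  Let `P'` be the image of `P` in `G = P^gp/Q^gp`.  Then `P'`
is `p`-saturated: every `y ∈ G` with `p • y ∈ P'` lies in `P'`.  (Note that `P'`
generates `G`, so `G = (P')^gp`.) -/
theorem image_pSaturated
    (p : ℕ) (hp : p.Prime)
    {GQ GP : Type*} [AddCommGroup GQ] [AddCommGroup GP]
    (Q : AddSubmonoid GQ) (P : AddSubmonoid GP)
    (φ : GQ →+ GP) (hmap : ∀ x ∈ Q, φ x ∈ P)
    (hQGen : AddSubgroup.closure (Q : Set GQ) = ⊤)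
    (hPGen : AddSubgroup.closure (P : Set GP) = ⊤)
    (hPsat : ∀ g : GP, p • g ∈ P → g ∈ P) :
    ∀ y : GP ⧸ AddMonoidHom.range φ,
      p • y ∈ (QuotientAddGroup.mk' (AddMonoidHom.range φ)) '' (P : Set GP) →
      y ∈ (QuotientAddGroup.mk' (AddMonoidHom.range φ)) '' (P : Set GP) := by
  intro y hy
  have key : ∀ c : GQ, ∃ a ∈ Q, ∃ b ∈ Q, c = a - b := by
    intro c
    have hc : c ∈ AddSubgroup.closure (Q : Set GQ) := by rw [hQGen]; trivial
    induction hc using AddSubgroup.closure_induction with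
    | mem x hx => exact ⟨x, hx, 0, Q.zero_mem, by simp⟩
    | zero => exact ⟨0, Q.zero_mem, 0, Q.zero_mem, by simp⟩
    | add x y _ _ hx hy =>
      obtain ⟨a, ha, b, hb, rfl⟩ := hx
      obtain ⟨a', ha', b', hb', rfl⟩ := hy
      exact ⟨a + a', Q.add_mem ha ha', b + b', Q.add_mem hb hb', by abel⟩
    | neg x _ hx =>
      obtain ⟨a, ha, b, hb, rfl⟩ := hx
      exact ⟨b, hb, a, ha, by abel⟩
  obtain ⟨g, rfl⟩ := QuotientAddGroup.mk'_surjective _ y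
  obtain ⟨x, hx, hxy⟩ := hy
  rw [← map_nsmul, QuotientAddGroup.mk'_eq_mk'] at hxy
  obtain ⟨z, ⟨c, rfl⟩, hz⟩ := hxy
  obtain ⟨a, ha, b, hb, rfl⟩ := key c
  refine ⟨g + φ b, hPsat _ ?_, ?_⟩
  · obtain ⟨n, rfl⟩ : ∃ n, p = n + 1 := ⟨p - 1, by have := hp.pos; omega⟩
    have h : (n + 1) • (g + φ b) = x + φ a + n • φ b := by
      rw [nsmul_add, ← hz, map_sub, succ_nsmul (φ b)]; abel
    rw [h]
    exact P.add_mem (P.add_mem hx (hmap a ha)) (P.nsmul_mem (hmap b hb) n)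
  · rw [QuotientAddGroup.mk'_eq_mk']
    exact ⟨φ (-b), ⟨-b, rfl⟩, by simp⟩
end

section
/- Let p be a prime and f: Q → P an injective homomorphism of integral monoids such that Q is saturated and P^gp/Q^gp has no p-torsion. Then for every n ∈ ℕ and every q ∈ Q, if f(q) = p^n·g for some g ∈ P^gp, then q = p^n·q' for some q' ∈ Q; that is, inside P^gp, the image of Q meets p^n·P^gp exactly in the image of p^n·Q. -/
/-- Let `p` be a prime and `f : Q → P` an injective homomorphism
of integral monoids such that `Q` is saturated and `P^gp/Q^gp` has no `p`-torsion.
(Monoids are modelled as additive submonoids of the abelian groups `GQ = Q^gp`,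
`GP = P^gp` they generate, `f` being the restriction of `φ = f^gp : GQ →+ GP`.)
Then for every `n ∈ ℕ` and `q ∈ Q`:  `φ q = p^n • g` for some `g ∈ P^gp` if and
only if `q = p^n • q'` for some `q' ∈ Q`; that is, inside `P^gp` the image of `Q`
meets `p^n • P^gp` exactly in the image of `p^n • Q`. -/
theorem mem_pPow_smul_iff
    (p : ℕ) (hp : p.Prime)
    {GQ GP : Type*} [AddCommGroup GQ] [AddCommGroup GP]
    (Q : AddSubmonoid GQ) (P : AddSubmonoid GP)
    (φ : GQ →+ GP) (hmap : ∀ x ∈ Q, φ x ∈ P)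
    (hinj : ∀ a ∈ Q, ∀ b ∈ Q, φ a = φ b → a = b)
    (hQGen : AddSubgroup.closure (Q : Set GQ) = ⊤)
    (hPGen : AddSubgroup.closure (P : Set GP) = ⊤)
    (hQsat : ∀ g : GQ, ∀ n : ℕ, 0 < n → n • g ∈ Q → g ∈ Q)
    (hNoPTor : ∀ g : GP, p • g ∈ AddMonoidHom.range φ → g ∈ AddMonoidHom.range φ) :
    ∀ n : ℕ, ∀ q ∈ Q,
      ((∃ g : GP, φ q = p ^ n • g) ↔ ∃ q' ∈ Q, q = p ^ n • q') := by
  have key : ∀ x : GQ, ∃ a ∈ Q, ∃ b ∈ Q, x = a - b := by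
    intro x
    have hx : x ∈ AddSubgroup.closure (Q : Set GQ) := by rw [hQGen]; trivial
    induction hx using AddSubgroup.closure_induction with
    | mem x hx => exact ⟨x, hx, 0, Q.zero_mem, by simp⟩
    | zero => exact ⟨0, Q.zero_mem, 0, Q.zero_mem, by simp⟩
    | add x y _ _ hx hy =>
      obtain ⟨a, ha, b, hb, rfl⟩ := hx
      obtain ⟨c, hc, d, hd, rfl⟩ := hy
      exact ⟨a + c, Q.add_mem ha hc, b + d, Q.add_mem hb hd, by abel⟩
    | neg x _ hx =>
      obtain ⟨a, ha, b, hb, rfl⟩ := hx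
      exact ⟨b, hb, a, ha, by abel⟩
  have inj : Function.Injective φ := by
    rw [injective_iff_map_eq_zero]
    intro x hx
    obtain ⟨a, ha, b, hb, rfl⟩ := key x
    rw [map_sub, sub_eq_zero] at hx
    rw [hinj a ha b hb hx, sub_self]
  have tor : ∀ n : ℕ, ∀ g : GP, p ^ n • g ∈ AddMonoidHom.range φ →
      g ∈ AddMonoidHom.range φ := by
    intro n
    induction n with
    | zero => intro g hg; simpa using hg
    | succ k ih =>
      intro g hg
      rw [pow_succ, mul_smul] at hg
      exact hNoPTor g (ih _ hg)
  intro n q hq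
  constructor
  · rintro ⟨g, hg⟩
    obtain ⟨y, rfl⟩ := tor n g ⟨q, hg⟩
    have h : q = p ^ n • y := inj (by rw [hg, map_nsmul])
    exact ⟨y, hQsat y (p ^ n) (pow_pos hp.pos n) (h ▸ hq), h⟩
  · rintro ⟨y, _, rfl⟩
    exact ⟨φ y, map_nsmul φ _ _⟩
end

section
/- Let p be a prime and f: Q → P an injective homomorphism of integral monoids such that Q is saturated, Q^gp and P^gp are torsion free, and P^gp/Q^gp has no p-torsion. Then for every q ∈ Q[1/p] and r ∈ P, the element f(q) + r of P^gp ⊗_ℤ ℤ[1/p] (where f also denotes the induced map Q^gp ⊗ ℤ[1/p] → P^gp ⊗ ℤ[1/p]) lies in P[1/p] and u_P(f(q) + r) = u_Q(q). In particular u_P(f(q)) = u_Q(q) for all q ∈ Q[1/p]. -/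
/-- Let `p` be a prime and `f : Q → P` an injective
homomorphism of integral monoids such that `Q` is saturated, `Q^gp` and `P^gp`
are torsion free, and `P^gp/Q^gp` has no `p`-torsion.  (Monoids are modelled as
additive submonoids of the abelian groups `GQ = Q^gp`, `GP = P^gp` they generate,
`f` being the restriction of `φ = f^gp : GQ →+ GP`; `ιQ : GQ →+ HQ` and
`ιP : GP →+ HP` realize the localizations `Q^gp ⊗ ℤ[1/p]` and `P^gp ⊗ ℤ[1/p]`,
and `ψ : HQ →+ HP` is the induced map.)  Then for every `q ∈ Q[1/p]` and `r ∈ P`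
the element `f(q) + r` lies in `P[1/p]` with `u_P(f(q) + r) = u_Q(q)`.  In
particular `u_P(f(q)) = u_Q(q)` for all `q ∈ Q[1/p]`. -/
theorem uVal_map_add (p : ℕ) (hp : p.Prime)
    {GQ GP HQ HP : Type*} [AddCommGroup GQ] [AddCommGroup GP]
    [AddCommGroup HQ] [AddCommGroup HP]
    (Q : AddSubmonoid GQ) (P : AddSubmonoid GP)
    (φ : GQ →+ GP) (hmap : ∀ x ∈ Q, φ x ∈ P)
    (hinj : ∀ a ∈ Q, ∀ b ∈ Q, φ a = φ b → a = b)
    (hQGen : AddSubgroup.closure (Q : Set GQ) = ⊤)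
    (hPGen : AddSubgroup.closure (P : Set GP) = ⊤)
    (hQsat : ∀ g : GQ, ∀ n : ℕ, 0 < n → n • g ∈ Q → g ∈ Q)
    (hTFQ : ∀ (g : GQ) (n : ℕ), 0 < n → n • g = 0 → g = 0)
    (hTFP : ∀ (g : GP) (n : ℕ), 0 < n → n • g = 0 → g = 0)
    (hNoPTor : ∀ g : GP, p • g ∈ AddMonoidHom.range φ → g ∈ AddMonoidHom.range φ)
    (ιQ : GQ →+ HQ) (hlocQ : IsPLocalization p ιQ)
    (ιP : GP →+ HP) (hlocP : IsPLocalization p ιP)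
    (ψ : HQ →+ HP) (hψ : ∀ g : GQ, ψ (ιQ g) = ιP (φ g)) :
    (∀ q ∈ pDiv p ιQ Q, ∀ r ∈ P,
        ψ q + ιP r ∈ pDiv p ιP P ∧
        uVal p ιP P (ψ q + ιP r) = uVal p ιQ Q q) ∧
    (∀ q ∈ pDiv p ιQ Q,
        ψ q ∈ pDiv p ιP P ∧ uVal p ιP P (ψ q) = uVal p ιQ Q q) := by
  have ppos : ∀ n : ℕ, 0 < p ^ n := fun n => pow_pos hp.pos n
  have diff : ∀ x : GQ, ∃ a ∈ Q, ∃ b ∈ Q, x = a - b := by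
    intro x
    have hx : x ∈ AddSubgroup.closure (Q : Set GQ) := by rw [hQGen]; trivial
    induction hx using AddSubgroup.closure_induction with
    | mem x hx => exact ⟨x, hx, 0, Q.zero_mem, by simp⟩
    | zero => exact ⟨0, Q.zero_mem, 0, Q.zero_mem, by simp⟩
    | add x y _ _ hx hy =>
      obtain ⟨a, ha, b, hb, rfl⟩ := hx
      obtain ⟨c, hc, d, hd, rfl⟩ := hy
      exact ⟨a + c, Q.add_mem ha hc, b + d, Q.add_mem hb hd, by abel⟩
    | neg x _ hx =>
      obtain ⟨a, ha, b, hb, rfl⟩ := hx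
      exact ⟨b, hb, a, ha, by abel⟩
  have φinj : Function.Injective φ := by
    rw [injective_iff_map_eq_zero]
    intro x hx
    obtain ⟨a, ha, b, hb, rfl⟩ := diff x
    rw [map_sub, sub_eq_zero] at hx
    rw [hinj a ha b hb hx, sub_self]
  have ιinj : Function.Injective ιP := by
    rw [injective_iff_map_eq_zero]
    intro x hx
    obtain ⟨n, hn⟩ := (hlocP.ker_eq x).1 hx
    exact hTFP x _ (ppos n) hn
  have tor : ∀ (m : ℕ) (g : GP), p ^ m • g ∈ AddMonoidHom.range φ →
      g ∈ AddMonoidHom.range φ := by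
    intro m
    induction m with
    | zero => intro g hg; simpa using hg
    | succ m ih =>
      intro g hg
      apply hNoPTor
      apply ih
      rwa [smul_smul, ← pow_succ]
  have hcanc : ∀ (m : ℕ) (x y : HQ), p ^ m • x = p ^ m • y → x = y := by
    intro m
    induction m with
    | zero => intro x y h; simpa using h
    | succ m ih =>
      intro x y h
      apply hlocQ.smul_bij.1
      apply ih
      simpa only [smul_smul, ← pow_succ] using h
  have fwd : ∀ (q : HQ) (r : GP), r ∈ P → ∀ n : ℕ, p ^ n • q ∈ ιQ '' (Q : Set GQ) →
      p ^ n • (ψ q + ιP r) ∈ ιP '' (P : Set GP) := by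
    rintro q r hr n ⟨a, ha, h⟩
    refine ⟨φ a + p ^ n • r, P.add_mem (hmap a ha) (P.nsmul_mem hr _), ?_⟩
    rw [map_add, ← hψ, h, map_nsmul, map_nsmul, smul_add]
  have bwd : ∀ q ∈ pDiv p ιQ Q, ∀ r ∈ P, ∀ n : ℕ,
      p ^ n • (ψ q + ιP r) ∈ ιP '' (P : Set GP) → p ^ n • q ∈ ιQ '' (Q : Set GQ) := by
    rintro q ⟨m, a, ha, hqa⟩ r hr n ⟨s, hs, h⟩
    have hg : ιP (s - p ^ n • r) = p ^ n • ψ q := by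
      rw [map_sub, h, map_nsmul, smul_add]; abel
    have key : p ^ m • (s - p ^ n • r) = φ (p ^ n • a) := by
      apply ιinj
      rw [map_nsmul, hg, ← hψ, map_nsmul, map_nsmul, hqa, map_nsmul, smul_comm]
    obtain ⟨b, hb⟩ := tor m _ ⟨_, key.symm⟩
    have hba : p ^ m • b = p ^ n • a := by
      apply φinj
      rw [map_nsmul, hb, key]
    refine ⟨b, hQsat b _ (ppos m) (hba ▸ Q.nsmul_mem ha _), ?_⟩
    apply hcanc m
    rw [← map_nsmul, hba, map_nsmul, hqa, smul_comm]
  have main : ∀ q ∈ pDiv p ιQ Q, ∀ r ∈ P,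
      ψ q + ιP r ∈ pDiv p ιP P ∧
      uVal p ιP P (ψ q + ιP r) = uVal p ιQ Q q := by
    intro q hq r hr
    refine ⟨?_, ?_⟩
    · obtain ⟨n, hn⟩ := hq
      exact ⟨n, fwd q r hr n hn⟩
    · unfold uVal
      congr 1
      ext n
      exact ⟨bwd q hq r hr n, fwd q r hr n⟩
  refine ⟨main, fun q hq => ?_⟩
  simpa using main q hq 0 P.zero_mem
end

section
/- Let p be a prime and f: Q → P a p-quasi-saturated homomorphism of integral monoids such that P is saturated and sharp (its only unit is 0). Then every x ∈ P^gp such that p·x lies in the image of f^gp: Q^gp → P^gp itself lies in the image of Q^gp; consequently, P^gp/Q^gp has no p-torsion. -/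
theorem exists_sub_aux {G : Type*} [AddCommGroup G] (M : AddSubmonoid G)
    (h : AddSubgroup.closure (M : Set G) = ⊤) (x : G) :
    ∃ a ∈ M, ∃ b ∈ M, x = a - b := by
  have hx : x ∈ AddSubgroup.closure (M : Set G) := by rw [h]; trivial
  induction hx using AddSubgroup.closure_induction with
  | mem x hx => exact ⟨x, hx, 0, M.zero_mem, by simp⟩
  | zero => exact ⟨0, M.zero_mem, 0, M.zero_mem, by simp⟩
  | add x y _ _ hx hy =>
    obtain ⟨a, ha, b, hb, rfl⟩ := hx
    obtain ⟨c, hc, d, hd, rfl⟩ := hy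
    exact ⟨a + c, M.add_mem ha hc, b + d, M.add_mem hb hd, by abel⟩
  | neg x _ hx =>
    obtain ⟨a, ha, b, hb, rfl⟩ := hx
    exact ⟨b, hb, a, ha, by abel⟩

/-- Let `p` be a prime and `f : Q → P` a `p`-quasi-saturated
homomorphism of integral monoids such that `P` is saturated and sharp (its only
unit is `0`).  (Monoids are modelled as additive submonoids of the abelian groups
`GQ = Q^gp`, `GP = P^gp` they generate, `f` being the restriction of
`φ = f^gp : GQ →+ GP`.)  Then every `x ∈ P^gp` with `p • x` in the image of
`f^gp : Q^gp → P^gp` lies itself in the image of `Q^gp`; consequently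
`P^gp/Q^gp` has no `p`-torsion. -/
theorem noPTorsion_of_quasiSaturated
    (p : ℕ) (hp : p.Prime)
    {GQ GP : Type*} [AddCommGroup GQ] [AddCommGroup GP]
    (Q : AddSubmonoid GQ) (P : AddSubmonoid GP)
    (φ : GQ →+ GP) (hmap : ∀ x ∈ Q, φ x ∈ P)
    (hQGen : AddSubgroup.closure (Q : Set GQ) = ⊤)
    (hPGen : AddSubgroup.closure (P : Set GP) = ⊤)
    (hpqs : ∀ r₁ ∈ P, ∀ r₂ ∈ P, ∀ q₁ ∈ Q, ∀ q₂ ∈ Q,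
        p • (r₁ - r₂) + φ (q₁ - q₂) ∈ P →
        ∃ x : GQ, (r₁ - r₂) + φ x ∈ P ∧ (q₁ - q₂) - p • x ∈ Q)
    (hPsat : ∀ g : GP, ∀ n : ℕ, 0 < n → n • g ∈ P → g ∈ P)
    (hsharp : ∀ x ∈ P, -x ∈ P → x = 0) :
    (∀ x : GP, p • x ∈ AddMonoidHom.range φ → x ∈ AddMonoidHom.range φ) ∧
    (∀ y : GP ⧸ AddMonoidHom.range φ, p • y = 0 → y = 0) := by
  have key : ∀ x : GP, p • x ∈ AddMonoidHom.range φ → x ∈ AddMonoidHom.range φ := by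
    rintro x ⟨q, hq⟩
    obtain ⟨r₁, h1, r₂, h2, hx⟩ := exists_sub_aux P hPGen x
    obtain ⟨q₁, h3, q₂, h4, hq'⟩ := exists_sub_aux Q hQGen (-q)
    have h0 : p • (r₁ - r₂) + φ (q₁ - q₂) ∈ P := by
      rw [← hx, ← hq', map_neg, hq, add_neg_cancel]
      exact P.zero_mem
    obtain ⟨y, hy1, hy2⟩ := hpqs r₁ h1 r₂ h2 q₁ h3 q₂ h4 h0
    rw [← hx] at hy1
    rw [← hq'] at hy2
    have h5 : p • (-(x + φ y)) ∈ P := by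
      have h6 := hmap _ hy2
      rw [map_sub, map_neg, hq, map_nsmul] at h6
      have h7 : p • (-(x + φ y)) = -(p • x) - p • φ y := by
        rw [smul_neg, smul_add]; abel
      rw [h7]; exact h6
    have h8 := hsharp _ hy1 (hPsat _ p hp.pos h5)
    exact ⟨-y, by rw [map_neg]; exact (eq_neg_of_add_eq_zero_left h8).symm⟩
  refine ⟨key, fun y => ?_⟩
  induction y using QuotientAddGroup.induction_on with
  | H x =>
    intro h
    rw [← QuotientAddGroup.mk_nsmul, QuotientAddGroup.eq_zero_iff] at h
    exact (QuotientAddGroup.eq_zero_iff x).2 (key x h)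
end

section
/- Let p be a prime and f: Q → P an injective p-saturated homomorphism of fs monoids such that Q^gp, P^gp and P^gp/Q^gp are torsion free, and let J ⊆ Q be a radical ideal. Then an element x ∈ P is J-minimal if and only if p·x is J-minimal. -/
/-- `x ∈ P` is `J`-minimal (for an ideal `J ⊆ Q` and a monoid homomorphism
`f : Q → P` restricted from `φ : Q^gp →+ P^gp`) if `x` cannot be written as
`x = r + f q` with `r ∈ P` and `q ∈ J`. -/
def JMinimal {GQ GP : Type*} [AddCommGroup GQ] [AddCommGroup GP]
    (φ : GQ →+ GP) (P : AddSubmonoid GP) (J : Set GQ) (x : GP) : Prop :=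
  ¬ ∃ r ∈ P, ∃ q ∈ J, x = r + φ q

/-- Let `p` be a prime and `f : Q → P` an injective
`p`-saturated homomorphism of fs monoids such that `Q^gp`, `P^gp` and
`P^gp/Q^gp` are torsion free, and let `J ⊆ Q` be a radical ideal.  (Monoids are
modelled as additive submonoids of the abelian groups `GQ = Q^gp`, `GP = P^gp`
they generate, `f` being the restriction of `φ = f^gp : GQ →+ GP`.)  Then an
element `x ∈ P` is `J`-minimal if and only if `p • x` is `J`-minimal. -/
theorem jMinimal_iff_pSMul
    (p : ℕ) (hp : p.Prime)
    {GQ GP : Type*} [AddCommGroup GQ] [AddCommGroup GP]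
    (Q : AddSubmonoid GQ) (P : AddSubmonoid GP)
    (φ : GQ →+ GP) (hmap : ∀ x ∈ Q, φ x ∈ P)
    (hinj : ∀ a ∈ Q, ∀ b ∈ Q, φ a = φ b → a = b)
    (hQGen : AddSubgroup.closure (Q : Set GQ) = ⊤)
    (hPGen : AddSubgroup.closure (P : Set GP) = ⊤)
    (hQFG : AddMonoid.FG ↥Q) (hPFG : AddMonoid.FG ↥P)
    (hQsat : ∀ g : GQ, ∀ n : ℕ, 0 < n → n • g ∈ Q → g ∈ Q)
    (hPsat : ∀ g : GP, ∀ n : ℕ, 0 < n → n • g ∈ P → g ∈ P)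
    (hTFQ : ∀ (g : GQ) (n : ℕ), 0 < n → n • g = 0 → g = 0)
    (hTFP : ∀ (g : GP) (n : ℕ), 0 < n → n • g = 0 → g = 0)
    (hTFquot : ∀ (g : GP) (n : ℕ), 0 < n → n • g ∈ AddMonoidHom.range φ →
      g ∈ AddMonoidHom.range φ)
    (hpqs : ∀ r₁ ∈ P, ∀ r₂ ∈ P, ∀ q₁ ∈ Q, ∀ q₂ ∈ Q,
        p • (r₁ - r₂) + φ (q₁ - q₂) ∈ P →
        ∃ x : GQ, (r₁ - r₂) + φ x ∈ P ∧ (q₁ - q₂) - p • x ∈ Q)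
    (hint : ∀ a₁ ∈ Q, ∀ a₂ ∈ Q, ∀ b₁ ∈ P, ∀ b₂ ∈ P,
        φ a₁ + b₁ = φ a₂ + b₂ →
        ∃ a₃ ∈ Q, ∃ a₄ ∈ Q, ∃ b ∈ P,
          b₁ = φ a₃ + b ∧ b₂ = φ a₄ + b ∧ a₁ + a₃ = a₂ + a₄)
    (J : Set GQ) (hJQ : J ⊆ (Q : Set GQ))
    (hJideal : ∀ x ∈ J, ∀ q ∈ Q, x + q ∈ J)
    (hJrad : ∀ x ∈ Q, (∃ n : ℕ, 0 < n ∧ n • x ∈ J) → x ∈ J) :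
    ∀ x ∈ P, (JMinimal φ P J x ↔ JMinimal φ P J (p • x)) := by
  intro x hx
  have hp0 : 0 < p := hp.pos
  unfold JMinimal
  refine not_congr ⟨?_, ?_⟩
  · rintro ⟨r, hr, q, hq, rfl⟩
    refine ⟨p • r, P.nsmul_mem hr p, p • q, ?_, ?_⟩
    · have h := hJideal q hq ((p - 1) • q) (Q.nsmul_mem (hJQ hq) _)
      rwa [← succ_nsmul', Nat.sub_add_cancel hp0] at h
    · rw [nsmul_add, map_nsmul]
  · rintro ⟨r, hr, q, hq, he⟩
    obtain ⟨y, hy, hy'⟩ := hpqs x hx 0 P.zero_mem 0 Q.zero_mem q (hJQ hq) (by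
      have : p • (x - 0) + φ (0 - q) = r := by
        rw [sub_zero, he, zero_sub, map_neg]; abel
      rwa [this])
    have hz : p • (-y) ∈ J := by
      have h := hJideal q hq _ hy'
      have e : q + (0 - q - p • y) = p • (-y) := by rw [smul_neg]; abel
      rwa [e] at h
    refine ⟨x - 0 + φ y, hy, -y,
      hJrad _ (hQsat _ p hp0 (hJQ hz)) ⟨p, hp0, hz⟩, ?_⟩
    rw [map_neg]; abel
end

section
/- Let p be a prime and f: Q → P an injective p-saturated homomorphism of fs monoids such that Q^gp, P^gp and P^gp/Q^gp are torsion free, and let J ⊆ Q be a radical ideal. Set J[1/p] := {y ∈ Q[1/p] : p^n·y ∈ J for some n ∈ ℕ} and P' := {q + r : q ∈ Q[1/p], r ∈ P} ⊆ P[1/p], sums being taken in P^gp ⊗_ℤ ℤ[1/p] via the induced maps. Then an element x ∈ P' fails to be J-minimal if and only if there exist q ∈ J[1/p] and r ∈ P with x = q + r. -/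
/-- An element `x ∈ P[1/p]` is `J`-minimal if `p^n • x` is a `J`-minimal element
of `P` for some `n ∈ ℕ` with `p^n • x ∈ P`. -/
def JMinimalLoc (p : ℕ) {GQ GP HP : Type*} [AddCommGroup GQ] [AddCommGroup GP]
    [AddCommGroup HP] (φ : GQ →+ GP) (P : AddSubmonoid GP) (J : Set GQ)
    (ιP : GP →+ HP) (x : HP) : Prop :=
  ∃ (n : ℕ) (y : GP), y ∈ P ∧ ιP y = p ^ n • x ∧ JMinimal φ P J y

/-- `J[1/p] = {y ∈ Q[1/p] | p^n • y ∈ J for some n ∈ ℕ}`. -/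
def jDiv (p : ℕ) {GQ HQ : Type*} [AddCommGroup GQ] [AddCommGroup HQ]
    (ιQ : GQ →+ HQ) (Q : AddSubmonoid GQ) (J : Set GQ) : Set HQ :=
  {y | y ∈ pDiv p ιQ Q ∧ ∃ n : ℕ, p ^ n • y ∈ ιQ '' J}

theorem exists_diff_aux {G : Type*} [AddCommGroup G] (P : AddSubmonoid G)
    (h : AddSubgroup.closure (P : Set G) = ⊤) (g : G) : ∃ a ∈ P, ∃ b ∈ P, g = a - b := by
  have hg : g ∈ AddSubgroup.closure (P : Set G) := by rw [h]; trivial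
  induction hg using AddSubgroup.closure_induction with
  | mem x hx => exact ⟨x, hx, 0, P.zero_mem, by simp⟩
  | zero => exact ⟨0, P.zero_mem, 0, P.zero_mem, by simp⟩
  | add x y _ _ hx hy =>
    obtain ⟨a, ha, b, hb, rfl⟩ := hx
    obtain ⟨c, hc, d, hd, rfl⟩ := hy
    exact ⟨a + c, P.add_mem ha hc, b + d, P.add_mem hb hd, by abel⟩
  | neg x _ hx =>
    obtain ⟨a, ha, b, hb, rfl⟩ := hx
    exact ⟨b, hb, a, ha, by abel⟩

theorem not_jMinimal_iff
    (p : ℕ) (hp : p.Prime)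
    {GQ GP HQ HP : Type*} [AddCommGroup GQ] [AddCommGroup GP]
    [AddCommGroup HQ] [AddCommGroup HP]
    (Q : AddSubmonoid GQ) (P : AddSubmonoid GP)
    (φ : GQ →+ GP) (hmap : ∀ x ∈ Q, φ x ∈ P)
    (hinj : ∀ a ∈ Q, ∀ b ∈ Q, φ a = φ b → a = b)
    (hQGen : AddSubgroup.closure (Q : Set GQ) = ⊤)
    (hPGen : AddSubgroup.closure (P : Set GP) = ⊤)
    (hQFG : AddMonoid.FG ↥Q) (hPFG : AddMonoid.FG ↥P)
    (hQsat : ∀ g : GQ, ∀ n : ℕ, 0 < n → n • g ∈ Q → g ∈ Q)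
    (hPsat : ∀ g : GP, ∀ n : ℕ, 0 < n → n • g ∈ P → g ∈ P)
    (hTFQ : ∀ (g : GQ) (n : ℕ), 0 < n → n • g = 0 → g = 0)
    (hTFP : ∀ (g : GP) (n : ℕ), 0 < n → n • g = 0 → g = 0)
    (hTFquot : ∀ (g : GP) (n : ℕ), 0 < n → n • g ∈ AddMonoidHom.range φ →
      g ∈ AddMonoidHom.range φ)
    (hpqs : ∀ r₁ ∈ P, ∀ r₂ ∈ P, ∀ q₁ ∈ Q, ∀ q₂ ∈ Q,
        p • (r₁ - r₂) + φ (q₁ - q₂) ∈ P →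
        ∃ x : GQ, (r₁ - r₂) + φ x ∈ P ∧ (q₁ - q₂) - p • x ∈ Q)
    (hint : ∀ a₁ ∈ Q, ∀ a₂ ∈ Q, ∀ b₁ ∈ P, ∀ b₂ ∈ P,
        φ a₁ + b₁ = φ a₂ + b₂ →
        ∃ a₃ ∈ Q, ∃ a₄ ∈ Q, ∃ b ∈ P,
          b₁ = φ a₃ + b ∧ b₂ = φ a₄ + b ∧ a₁ + a₃ = a₂ + a₄)
    (J : Set GQ) (hJQ : J ⊆ (Q : Set GQ))
    (hJideal : ∀ x ∈ J, ∀ q ∈ Q, x + q ∈ J)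
    (hJrad : ∀ x ∈ Q, (∃ n : ℕ, 0 < n ∧ n • x ∈ J) → x ∈ J)
    (ιQ : GQ →+ HQ) (hlocQ : IsPLocalization p ιQ)
    (ιP : GP →+ HP) (hlocP : IsPLocalization p ιP)
    (ψ : HQ →+ HP) (hψ : ∀ g : GQ, ψ (ιQ g) = ιP (φ g)) :
    ∀ x : HP, (∃ q ∈ pDiv p ιQ Q, ∃ r ∈ P, x = ψ q + ιP r) →
      (¬ JMinimalLoc p φ P J ιP x ↔
        ∃ q ∈ jDiv p ιQ Q J, ∃ r ∈ P, x = ψ q + ιP r) := by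
  have qs : ∀ (n : ℕ) (g : GP) (h : GQ), p ^ n • g + φ h ∈ P →
      ∃ b : GQ, g + φ b ∈ P ∧ h - p ^ n • b ∈ Q := by
    intro n
    induction n with
    | zero =>
      intro g h H
      exact ⟨h, by simpa using H, by simp⟩
    | succ n ih =>
      intro g h H
      obtain ⟨r₁, h1, r₂, h2, e⟩ := exists_diff_aux P hPGen (p ^ n • g)
      obtain ⟨q₁, h3, q₂, h4, e'⟩ := exists_diff_aux Q hQGen h
      obtain ⟨b₁, hb, hb'⟩ := hpqs r₁ h1 r₂ h2 q₁ h3 q₂ h4 (by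
        rw [← e, ← e', smul_smul, ← pow_succ']; exact H)
      rw [← e] at hb
      rw [← e'] at hb'
      obtain ⟨b, hc, hc'⟩ := ih g b₁ hb
      refine ⟨b, hc, ?_⟩
      have := Q.add_mem hb' (Q.nsmul_mem hc' p)
      have e2 : h - p ^ (n + 1) • b = h - p • b₁ + p • (b₁ - p ^ n • b) := by
        rw [smul_sub, smul_smul, ← pow_succ']; abel
      rw [e2]; exact this
  have injP : Function.Injective ιP := by
    rw [injective_iff_map_eq_zero]
    intro a ha
    obtain ⟨n, hn⟩ := (hlocP.ker_eq a).1 ha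
    exact hTFP a _ (pow_pos hp.pos n) hn
  rintro x ⟨q0, ⟨k, a, haQ, ha⟩, r0, hr0, hx⟩
  constructor
  · intro hn
    have key : ιP (φ a + p ^ k • r0) = p ^ k • x := by
      rw [hx, map_add, ← hψ, ha, smul_add, map_nsmul, map_nsmul]
    have hmem : φ a + p ^ k • r0 ∈ P := P.add_mem (hmap a haQ) (P.nsmul_mem hr0 _)
    have : ∃ r ∈ P, ∃ q ∈ J, φ a + p ^ k • r0 = r + φ q := by
      by_contra hc
      exact hn ⟨k, _, hmem, key, hc⟩
    obtain ⟨r, hr, j, hj, e⟩ := this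
    obtain ⟨b, hb, hb'⟩ := qs k r0 (a - j) (by
      have : p ^ k • r0 + φ (a - j) = r := by
        rw [map_sub, ← add_sub_assoc, add_comm _ (φ a), e]; abel
      rw [this]; exact hr)
    have hJ : a - p ^ k • b ∈ J := by
      have := hJideal j hj _ hb'
      have e3 : a - p ^ k • b = j + (a - j - p ^ k • b) := by abel
      rw [e3]; exact this
    have e4 : p ^ k • (q0 - ιQ b) = ιQ (a - p ^ k • b) := by
      rw [smul_sub, map_sub, ha, map_nsmul]
    refine ⟨q0 - ιQ b, ⟨⟨k, _, hJQ hJ, e4.symm⟩, k, _, hJ, e4.symm⟩, r0 + φ b, hb, ?_⟩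
    rw [hx, map_sub, map_add, hψ]; abel
  · rintro ⟨q, ⟨-, m, j, hj, e⟩, r, hr, hx'⟩ ⟨n, y, hy, hyx, hmin⟩
    apply hmin
    have hadd : ∀ i : ℕ, (i + 1) • j ∈ J := by
      intro i
      rw [succ_nsmul']
      exact hJideal j hj _ (Q.nsmul_mem (hJQ hj) i)
    have hj' : p ^ n • j ∈ J := by
      obtain ⟨i, hi⟩ := Nat.exists_eq_succ_of_ne_zero (pow_pos hp.pos n).ne'
      rw [hi]; exact hadd i
    have e5 : p ^ m • y = φ (p ^ n • j) + p ^ (n + m) • r := by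
      apply injP
      rw [map_nsmul, hyx, hx', map_add, ← hψ, map_nsmul ιQ, e, map_nsmul ψ, map_nsmul ψ, map_nsmul,
        smul_smul, smul_smul, smul_add, ← pow_add, ← pow_add, add_comm m n]
    obtain ⟨b, hb, hb'⟩ := qs m y (-(p ^ n • j)) (by
      rw [e5, map_neg, add_comm, neg_add_cancel_left]
      exact P.nsmul_mem hr _)
    have hbJ : p ^ m • (-b) ∈ J := by
      have := hJideal _ hj' _ hb'
      have e6 : p ^ m • (-b) = p ^ n • j + (-(p ^ n • j) - p ^ m • b) := by
        rw [smul_neg]; abel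
      rw [e6]; exact this
    have hpos := pow_pos hp.pos m
    exact ⟨_, hb, -b, hJrad _ (hQsat _ _ hpos (hJQ hbJ)) ⟨_, hpos, hbJ⟩, by simp⟩
end
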